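/- There exists an ergodic C^∞ diffeomorphism T of the torus 𝕋² preserving the Haar–Lebesgue probability measure λ such that T is measure-theoretically isomorphic to the rotation of the circle by some irrational number and the upper topological slow entropy of T with respect to the logarithmic scaling family a^{ln}_m(t) = (ln m)^t equals 1. -/

import Mathlib

open MeasureTheory Filter Set
open scoped Topology ENNReal NNReal

noncomputable section

/-- The Bowen metric `d_n^T(x,y) = max_{0 ≤ i ≤ n-1} d(T^i x, T^i y)`. -/
def bowenDist {X : Type*} [PseudoMetricSpace X] (T : X → X) (n : ℕ) (x y : X) : ℝ :=
  (((Finset.range n).sup fun i => nndist (T^[i] x) (T^[i] y)) : ℝ≥0)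

/-- `N_{d_n^T}(ε)`: the minimal number of `(ε,n)`-Bowen balls of `T` needed to cover the
whole space. -/
def bowenCoverNum {X : Type*} [PseudoMetricSpace X] (T : X → X) (n : ℕ) (ε : ℝ) : ℕ :=
  sInf {N : ℕ | ∃ F : Finset X, F.card = N ∧ ∀ y : X, ∃ x ∈ F, bowenDist T n x y < ε}

/-- `N(ε)`: the supremum (`0` if the set is empty, by the `Real.sSup` convention) of all
`t > 0` such that `limsup_n N_{d_n^T}(ε) / a_n(t) > 0`. -/
def topSlowEntFun {X : Type*} [PseudoMetricSpace X] (T : X → X) (a : ℕ → ℝ → ℝ) (ε : ℝ) : ℝ :=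
  sSup {t : ℝ | 0 < t ∧
    0 < Filter.atTop.limsup fun n => (bowenCoverNum T n ε : ℝ≥0∞) / ENNReal.ofReal (a n t)}

/-- The upper topological slow entropy of `T` with respect to the scaling family `a`
equals `E`, i.e. `N(ε) → E` as `ε → 0⁺`. -/
def HasUpperTopSlowEntropy {X : Type*} [PseudoMetricSpace X] (T : X → X)
    (a : ℕ → ℝ → ℝ) (E : ℝ) : Prop :=
  Filter.Tendsto (topSlowEntFun T a) (𝓝[>] (0 : ℝ)) (𝓝 E)

/-- The circle `𝕋¹ = ℝ/ℤ` with its quotient metric and Haar–Lebesgue probability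
measure `volume`. -/
abbrev Torus1 : Type := AddCircle (1 : ℝ)

/-- The 2-torus `𝕋² = ℝ²/ℤ²`, with its quotient (flat) metric, its Borel σ-algebra and
its Haar–Lebesgue probability measure `volume`. -/
abbrev Torus2 : Type := AddCircle (1 : ℝ) × AddCircle (1 : ℝ)

/-- Canonical projection `ℝ² → 𝕋²`. -/
def torusProj : ℝ × ℝ → Torus2 := fun p => ((p.1 : Torus1), (p.2 : Torus1))

/-- `F : ℝ² → ℝ²` is a lift of `T : 𝕋² → 𝕋²`. -/
def IsLiftOf (F : ℝ × ℝ → ℝ × ℝ) (T : Torus2 → Torus2) : Prop :=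
  ∀ p, torusProj (F p) = T (torusProj p)

/-- `T` is a `C^k` diffeomorphism of the torus: it is a bijection and both `T` and `T⁻¹`
admit `C^k` lifts to the universal cover `ℝ²`. -/
def IsCkTorusDiffeo (k : ℕ∞) (T : Torus2 → Torus2) : Prop :=
  Function.Bijective T ∧
  (∃ F : ℝ × ℝ → ℝ × ℝ, ContDiff ℝ k F ∧ IsLiftOf F T) ∧
  (∃ G : ℝ × ℝ → ℝ × ℝ, ContDiff ℝ k G ∧ IsLiftOf G (Function.invFun T))

/-- `T` is weakly mixing w.r.t. the measure `μ`: `T × T` is ergodic for `μ × μ`. -/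
def WeaklyMixing {X : Type*} [MeasurableSpace X] (T : X → X) (μ : Measure X) : Prop :=
  Ergodic (fun p : X × X => (T p.1, T p.2)) (μ.prod μ)

/-- `T` is uniquely ergodic with the Haar–Lebesgue measure `volume` as its unique
invariant Borel probability measure. -/
def UniquelyErgodicWithVolume (T : Torus2 → Torus2) : Prop :=
  MeasurePreserving T volume volume ∧
  ∀ μ : Measure Torus2, IsProbabilityMeasure μ → MeasurePreserving T μ μ → μ = volume

/-- `T` (preserving the Haar measure `volume` on `𝕋²`) is measure-theoretically isomorphic
to the rotation of the circle `𝕋¹ = ℝ/ℤ` by some irrational number `α`. -/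
def IsoToIrrationalRotation (T : Torus2 → Torus2) : Prop :=
  ∃ α : ℝ, Irrational α ∧
    ∃ (A : Set Torus2) (B : Set Torus1) (ψ : Torus2 → Torus1) (φ : Torus1 → Torus2),
      MeasurableSet A ∧ MeasurableSet B ∧
      volume Aᶜ = 0 ∧ volume Bᶜ = 0 ∧
      Set.MapsTo T A A ∧ Set.MapsTo (fun y : Torus1 => y + (α : Torus1)) B B ∧
      Measurable ψ ∧ Measurable φ ∧
      Set.MapsTo ψ A B ∧ Set.MapsTo φ B A ∧
      (∀ x ∈ A, φ (ψ x) = x) ∧ (∀ y ∈ B, ψ (φ y) = y) ∧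
      Measure.map ψ volume = volume ∧
      (∀ x ∈ A, ψ (T x) = ψ x + (α : Torus1))

/-- A finite measurable partition of `X`. -/
structure FinMeasPartition (X : Type*) [MeasurableSpace X] where
  card : ℕ
  piece : Fin card → Set X
  measurable : ∀ i, MeasurableSet (piece i)
  disjoint : Pairwise fun i j => Disjoint (piece i) (piece j)
  cover : (⋃ i, piece i) = Set.univ

open Classical in
/-- The normalized Hamming distance between the length-`n` `P`-codings of the `T`-orbits
of `x` and `y` (the codings differ at time `k` iff `T^k x` and `T^k y` lie in different
pieces of `P`). -/
def codeHammingDist {X : Type*} [MeasurableSpace X] (T : X → X) (P : FinMeasPartition X)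
    (n : ℕ) (x y : X) : ℝ :=
  (((Finset.range n).filter fun k =>
      ¬ ∃ i, T^[k] x ∈ P.piece i ∧ T^[k] y ∈ P.piece i).card : ℝ) / n

/-- `S^H_P(T,n,ε)`: the minimal number of `(ε,n)`-Hamming balls whose union has
`μ`-measure greater than `1 - ε`. -/
def hammingCoverNum {X : Type*} [MeasurableSpace X] (μ : Measure X) (T : X → X)
    (P : FinMeasPartition X) (n : ℕ) (ε : ℝ) : ℕ :=
  sInf {N : ℕ | ∃ F : Finset X, F.card = N ∧
    ENNReal.ofReal (1 - ε) < μ (⋃ x ∈ F, {y | codeHammingDist T P n x y < ε})}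

/-- For a fixed partition `P` and `ε > 0`: the supremum (with the `Real.sSup` convention,
`0` if the set is empty) of all `t > 0` with `limsup_n S^H_P(T,n,ε)/a_n(t) > 0`. -/
def measSlowEntFun {X : Type*} [MeasurableSpace X] (μ : Measure X) (T : X → X)
    (a : ℕ → ℝ → ℝ) (P : FinMeasPartition X) (ε : ℝ) : ℝ :=
  sSup {t : ℝ | 0 < t ∧
    0 < Filter.atTop.limsup fun n =>
      (hammingCoverNum μ T P n ε : ℝ≥0∞) / ENNReal.ofReal (a n t)}

/-- The upper measure-theoretic slow entropy of `(T,μ)` w.r.t. the scaling family `a`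
equals `E`: for every finite measurable partition the limit as `ε → 0⁺` exists, and the
least upper bound over all partitions of these limits is `E`. -/
def HasUpperMeasSlowEntropy {X : Type*} [MeasurableSpace X] (μ : Measure X) (T : X → X)
    (a : ℕ → ℝ → ℝ) (E : ℝ) : Prop :=
  (∀ P : FinMeasPartition X, ∃ e : ℝ,
      Filter.Tendsto (measSlowEntFun μ T a P) (𝓝[>] (0 : ℝ)) (𝓝 e)) ∧
  IsLUB {e : ℝ | ∃ P : FinMeasPartition X,
      Filter.Tendsto (measSlowEntFun μ T a P) (𝓝[>] (0 : ℝ)) (𝓝 e)} E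

/-- `Γ_r(x) = (Γ(x^{1/r} + 1))^r`, where `Γ` is the Euler Gamma function. -/
def GammaR (r : ℕ) (x : ℝ) : ℝ := (Real.Gamma (x ^ ((r : ℝ)⁻¹) + 1)) ^ r

/-- The inverse of `Γ_r` on `[1,∞)` (where `Γ_r` is strictly increasing with `Γ_r 1 = 1`). -/
def GammaRInv (r : ℕ) (y : ℝ) : ℝ := sSup {x : ℝ | 1 ≤ x ∧ GammaR r x ≤ y}

/-- The intermediate scaling family `a^{int1,r}_m(t) = m^(t / Γ_r⁻¹(ln m / ln q₁))`. -/
def intScale1 (r q₁ : ℕ) (m : ℕ) (t : ℝ) : ℝ :=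
  (m : ℝ) ^ (t / GammaRInv r (Real.log m / Real.log q₁))

/-- The intermediate scaling family
`a^{int2,r}_m(t) = m^(t / (Γ_r⁻¹(ln m / ln q₁))^((r-2)/r))`. -/
def intScale2 (r q₁ : ℕ) (m : ℕ) (t : ℝ) : ℝ :=
  (m : ℝ) ^ (t / GammaRInv r (Real.log m / Real.log q₁) ^ (((r : ℝ) - 2) / (r : ℝ)))

/-- The logarithmic scaling family `a^{ln}_m(t) = (ln m)^t`. -/
def logScale (m : ℕ) (t : ℝ) : ℝ := Real.log m ^ t

/-- The polynomial scaling family `a^{pol}_m(t) = m^t`. -/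
def polScale (m : ℕ) (t : ℝ) : ℝ := (m : ℝ) ^ t

end


section
open MeasureTheory Filter Set
open scoped Topology ENNReal NNReal

namespace AbC

noncomputable section

/-- Shorthand for the universal cover. -/
abbrev E2 : Type := ℝ × ℝ

/-- Equivariance under integer translations. -/
def Equiv2 (H : E2 → E2) : Prop := ∀ (p : E2) (m n : ℤ), H (p + ((m : ℝ), (n : ℝ))) = H p + ((m : ℝ), (n : ℝ))

lemma torusProj_surj : Function.Surjective torusProj := by
  rintro ⟨a, b⟩
  obtain ⟨x, rfl⟩ := QuotientAddGroup.mk_surjective a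
  obtain ⟨y, rfl⟩ := QuotientAddGroup.mk_surjective b
  exact ⟨(x, y), rfl⟩

lemma coe_eq_iff (x y : ℝ) : (x : Torus1) = (y : Torus1) ↔ ∃ m : ℤ, x = y + m := by
  rw [← sub_eq_zero, ← AddCircle.coe_sub, AddCircle.coe_eq_zero_iff]
  constructor
  · rintro ⟨m, hm⟩
    exact ⟨m, by simp at hm; linarith⟩
  · rintro ⟨m, hm⟩
    exact ⟨m, by simp [hm]⟩

lemma torusProj_eq_iff (p p' : E2) :
    torusProj p = torusProj p' ↔ ∃ m n : ℤ, p = p' + ((m : ℝ), (n : ℝ)) := by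
  unfold torusProj
  rw [Prod.mk.injEq, coe_eq_iff, coe_eq_iff]
  constructor
  · rintro ⟨⟨m, hm⟩, ⟨n, hn⟩⟩
    exact ⟨m, n, Prod.ext hm hn⟩
  · rintro ⟨m, n, h⟩
    exact ⟨⟨m, by rw [h]; rfl⟩, ⟨n, by rw [h]; rfl⟩⟩

lemma torusProj_add_int (p : E2) (m n : ℤ) : torusProj (p + ((m : ℝ), (n : ℝ))) = torusProj p :=
  (torusProj_eq_iff _ _).2 ⟨m, n, rfl⟩

/-- A section of the projection. -/
def rep : Torus2 → E2 := Function.surjInv torusProj_surj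

@[simp] lemma proj_rep (z : Torus2) : torusProj (rep z) = z := Function.surjInv_eq _ z

/-- The map of the torus induced by an equivariant map. -/
def desc (H : E2 → E2) : Torus2 → Torus2 := fun z => torusProj (H (rep z))

lemma desc_proj {H : E2 → E2} (hH : Equiv2 H) (p : E2) : desc H (torusProj p) = torusProj (H p) := by
  unfold desc
  obtain ⟨m, n, h⟩ := (torusProj_eq_iff (rep (torusProj p)) p).1 (proj_rep _)
  rw [h, hH, torusProj_add_int]

lemma isLiftOf_desc {H : E2 → E2} (hH : Equiv2 H) : IsLiftOf H (desc H) := fun p => (desc_proj hH p).symm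

lemma Equiv2.comp {H K : E2 → E2} (hH : Equiv2 H) (hK : Equiv2 K) : Equiv2 (H ∘ K) := by
  intro p m n
  simp only [Function.comp]
  rw [hK, hH]

lemma desc_comp {H K : E2 → E2} (hH : Equiv2 H) (_hK : Equiv2 K) : desc (H ∘ K) = desc H ∘ desc K := by
  funext z
  simp only [desc, Function.comp]
  rw [← desc_proj hH]
  rfl

lemma Equiv2.id : Equiv2 (fun p => p) := fun _ _ _ => rfl

lemma desc_id : desc (fun p => p) = _root_.id := by
  funext z
  simp [desc]

lemma isOpenQuotientMap_proj : IsOpenQuotientMap torusProj := by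
  have h : IsOpenQuotientMap (fun x : ℝ => (x : Torus1)) := QuotientAddGroup.isOpenQuotientMap_mk
  exact h.prodMap h

lemma continuous_proj : Continuous torusProj := isOpenQuotientMap_proj.continuous

lemma desc_continuous {H : E2 → E2} (hH : Equiv2 H) (hc : Continuous H) : Continuous (desc H) := by
  rw [isOpenQuotientMap_proj.isQuotientMap.continuous_iff]
  have : desc H ∘ torusProj = torusProj ∘ H := by
    funext p; exact desc_proj hH p
  rw [this]
  exact continuous_proj.comp hc

lemma coe_norm_le (x : ℝ) : ‖(x : Torus1)‖ ≤ |x| := by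
  rw [AddCircle.norm_eq]
  simpa using round_le x 0

lemma dist_proj_le (p p' : E2) : dist (torusProj p) (torusProj p') ≤ dist p p' := by
  unfold torusProj
  rw [Prod.dist_eq, Prod.dist_eq]
  apply max_le_max
  · rw [dist_eq_norm, ← AddCircle.coe_sub, Real.dist_eq]
    exact coe_norm_le _
  · rw [dist_eq_norm, ← AddCircle.coe_sub, Real.dist_eq]
    exact coe_norm_le _

lemma dist_proj_ge (p p' : E2) : ‖((p.2 - p'.2 : ℝ) : Torus1)‖ ≤ dist (torusProj p) (torusProj p') := by
  unfold torusProj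
  rw [Prod.dist_eq, AddCircle.coe_sub, ← dist_eq_norm]
  exact le_max_right _ _

/-- Norm bound near `1/2`. -/
lemma norm_near_half (x : ℝ) (δ : ℝ) (h : |x - 1/2| ≤ δ) : 1/2 - δ ≤ ‖(x : Torus1)‖ := by
  rw [AddCircle.norm_eq]
  simp only [inv_one, one_mul, mul_one]
  have h1 := abs_le.1 h
  by_cases h0 : round x ≤ 0
  · have : (round x : ℝ) ≤ 0 := by exact_mod_cast h0
    rw [le_abs]; left; linarith
  · have : (1:ℝ) ≤ round x := by exact_mod_cast (by omega : 1 ≤ round x)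
    rw [le_abs]; right; linarith

/-- A pointwise limit of measure preserving maps is measure preserving. -/
lemma measurePreserving_of_tendsto {X Y : Type*} [MeasurableSpace X] [MetricSpace Y]
    [MeasurableSpace Y] [BorelSpace Y] {μ : Measure X} {ν : Measure Y}
    [IsProbabilityMeasure μ] [IsProbabilityMeasure ν] {f : ℕ → X → Y} {g : X → Y}
    (hf : ∀ n, MeasurePreserving (f n) μ ν) (hg : Measurable g)
    (hlim : ∀ x, Tendsto (fun n => f n x) atTop (𝓝 (g x))) : MeasurePreserving g μ ν := by
  refine ⟨hg, ?_⟩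
  haveI : IsProbabilityMeasure (μ.map g) := Measure.isProbabilityMeasure_map hg.aemeasurable
  apply ext_of_forall_integral_eq_of_IsFiniteMeasure
  intro φ
  rw [integral_map hg.aemeasurable φ.continuous.measurable.aestronglyMeasurable]
  have h1 : Tendsto (fun n => ∫ x, φ (f n x) ∂μ) atTop (𝓝 (∫ x, φ (g x) ∂μ)) := by
    apply tendsto_integral_of_dominated_convergence (fun _ => ‖φ‖)
    · intro n
      exact (φ.continuous.measurable.comp (hf n).measurable).aestronglyMeasurable
    · exact integrable_const _
    · intro n
      exact Eventually.of_forall fun x => φ.norm_coe_le_norm _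
    · exact Eventually.of_forall fun x => (φ.continuous.tendsto _).comp (hlim x)
  have h2 : ∀ n, ∫ x, φ (f n x) ∂μ = ∫ y, φ y ∂ν := by
    intro n
    rw [← (hf n).map_eq, integral_map (hf n).measurable.aemeasurable
      φ.continuous.measurable.aestronglyMeasurable]
  simp_rw [h2] at h1
  exact tendsto_nhds_unique h1 tendsto_const_nhds

/-- Vertical shear. -/
def mapA (f : ℝ → ℝ) : E2 → E2 := fun p => (p.1, p.2 + f p.1)
/-- Horizontal shear. -/
def mapB (g : ℝ → ℝ) : E2 → E2 := fun p => (p.1 + g p.2, p.2)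

lemma mapA_neg (f : ℝ → ℝ) (p : E2) : mapA f (mapA (fun x => - f x) p) = p := by
  simp [mapA]
lemma mapA_neg' (f : ℝ → ℝ) (p : E2) : mapA (fun x => - f x) (mapA f p) = p := by
  simp [mapA]
lemma mapB_neg (f : ℝ → ℝ) (p : E2) : mapB f (mapB (fun x => - f x) p) = p := by
  simp [mapB]
lemma mapB_neg' (f : ℝ → ℝ) (p : E2) : mapB (fun x => - f x) (mapB f p) = p := by
  simp [mapB]

lemma mapA_equiv {f : ℝ → ℝ} (hf : ∀ (x : ℝ) (m : ℤ), f (x + m) = f x) : Equiv2 (mapA f) := by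
  intro p m n
  ext
  · simp [mapA]
  · simp [mapA, hf]; ring

lemma mapB_equiv {f : ℝ → ℝ} (hf : ∀ (x : ℝ) (m : ℤ), f (x + m) = f x) : Equiv2 (mapB f) := by
  intro p m n
  ext
  · simp [mapB, hf]; ring
  · simp [mapB]

lemma mapA_continuous {f : ℝ → ℝ} (hf : Continuous f) : Continuous (mapA f) := by
  unfold mapA; fun_prop
lemma mapB_continuous {f : ℝ → ℝ} (hf : Continuous f) : Continuous (mapB f) := by
  unfold mapB; fun_prop

instance : IsProbabilityMeasure (volume : Measure Torus1) :=
  ⟨by rw [AddCircle.measure_univ]; simp⟩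

lemma mp_shearA (g : Torus1 → Torus1) (hg : Measurable g) :
    MeasurePreserving (fun z : Torus2 => (z.1, z.2 + g z.1)) volume volume := by
  have := MeasurePreserving.skew_product (μa := (volume : Measure Torus1)) (μb := volume)
    (μc := (volume : Measure Torus1)) (μd := volume)
    (f := _root_.id) (MeasurePreserving.id _) (g := fun a c => c + g a)
    (by
      have : Measurable (fun p : Torus1 × Torus1 => p.2 + g p.1) := by fun_prop
      exact this)
    (Eventually.of_forall fun a => (measurePreserving_add_right volume (g a)).map_eq)
  exact this

lemma mp_shearB (g : Torus1 → Torus1) (hg : Measurable g) :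
    MeasurePreserving (fun z : Torus2 => (z.1 + g z.2, z.2)) volume volume := by
  have hs : MeasurePreserving (Prod.swap : Torus2 → Torus2) volume volume :=
    Measure.measurePreserving_swap
  exact hs.comp ((mp_shearA g hg).comp hs)

/-- descend a real periodic function to a circle valued function on the circle. -/
lemma exists_circle_fun {f : ℝ → ℝ} (hf : ∀ (x : ℝ) (m : ℤ), f (x + m) = f x) (hc : Continuous f) :
    ∃ g : Torus1 → Torus1, Continuous g ∧ ∀ x : ℝ, g x = (f x : Torus1) := by
  have hp : Function.Periodic (fun x => (f x : Torus1)) 1 := by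
    intro x
    have := hf x 1
    simp only [Int.cast_one] at this
    simp [this]
  refine ⟨hp.lift, ?_, fun x => hp.lift_coe x⟩
  have h : IsOpenQuotientMap (fun x : ℝ => (x : Torus1)) := QuotientAddGroup.isOpenQuotientMap_mk
  rw [h.isQuotientMap.continuous_iff]
  have : hp.lift ∘ (fun x : ℝ => (x : Torus1)) = fun x => (f x : Torus1) := by
    funext x; exact hp.lift_coe x
  rw [this]
  exact h.continuous.comp hc

lemma mp_mapA {f : ℝ → ℝ} (hf : ∀ (x : ℝ) (m : ℤ), f (x + m) = f x) (hc : Continuous f) :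
    MeasurePreserving (desc (mapA f)) (volume : Measure Torus2) volume := by
  obtain ⟨g, hg, hgf⟩ := exists_circle_fun hf hc
  convert mp_shearA g hg.measurable using 1
  funext z
  obtain ⟨p, rfl⟩ := torusProj_surj z
  rw [desc_proj (mapA_equiv hf)]
  simp [torusProj, mapA, hgf]

lemma mp_mapB {f : ℝ → ℝ} (hf : ∀ (x : ℝ) (m : ℤ), f (x + m) = f x) (hc : Continuous f) :
    MeasurePreserving (desc (mapB f)) (volume : Measure Torus2) volume := by
  obtain ⟨g, hg, hgf⟩ := exists_circle_fun hf hc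
  convert mp_shearB g hg.measurable using 1
  funext z
  obtain ⟨p, rfl⟩ := torusProj_surj z
  rw [desc_proj (mapB_equiv hf)]
  simp [torusProj, mapB, hgf]

/-- The lifted rotation. -/
def rot (a : ℝ) : E2 → E2 := fun p => p + (a, 0)

lemma rot_eq (a : ℝ) : rot a = mapB (fun _ => a) := by
  funext p; ext <;> simp [rot, mapB]

lemma rot_equiv (a : ℝ) : Equiv2 (rot a) := by
  rw [rot_eq]; exact mapB_equiv (fun _ _ => rfl)

lemma mp_rot (a : ℝ) : MeasurePreserving (desc (rot a)) (volume : Measure Torus2) volume := by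
  rw [rot_eq]; exact mp_mapB (fun _ _ => rfl) continuous_const

lemma rot_rot (a b : ℝ) (p : E2) : rot a (rot b p) = rot (a + b) p := by
  ext <;> simp [rot]; ring

end

end AbC
end


section
open MeasureTheory Filter Set
open scoped Topology ENNReal NNReal ContDiff

namespace AbC

noncomputable section

section PB
variable {E F G : Type*} [NormedAddCommGroup E] [NormedSpace ℝ E] [NormedAddCommGroup F]
  [NormedSpace ℝ F] [NormedAddCommGroup G] [NormedSpace ℝ G]

/-- A family of maps whose derivatives are all bounded, polynomially in the parameter. -/
def PB (f : ℕ → E → F) : Prop := ∀ r : ℕ, ∃ C : ℝ, ∃ p : ℕ, 1 ≤ C ∧ ∀ k : ℕ, 1 ≤ k → ∀ i, 1 ≤ i → i ≤ r →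
  ∀ x, ‖iteratedFDeriv ℝ i (f k) x‖ ≤ C * (k : ℝ) ^ p

/-- Bound for derivatives of a composition. -/
lemma comp_bound {g : F → G} {f : E → F} (hg : ContDiff ℝ ∞ g) (hf : ContDiff ℝ ∞ f) {r : ℕ} {C D : ℝ}
    (hC0 : 0 ≤ C) (hD1 : 1 ≤ D)
    (hC : ∀ i, 1 ≤ i → i ≤ r → ∀ y, ‖iteratedFDeriv ℝ i g y‖ ≤ C)
    (hD : ∀ i, 1 ≤ i → i ≤ r → ∀ x, ‖iteratedFDeriv ℝ i f x‖ ≤ D) {i : ℕ} (h1 : 1 ≤ i) (hi : i ≤ r) (x : E) :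
    ‖iteratedFDeriv ℝ i (g ∘ f) x‖ ≤ (r.factorial : ℝ) * C * D ^ r := by
  have e : iteratedFDeriv ℝ i (g ∘ f) x = iteratedFDeriv ℝ i ((fun y => g y - g (f x)) ∘ f) x := by
    have : ((fun y => g y - g (f x)) ∘ f) = (g ∘ f) - fun _ => g (f x) := rfl
    rw [this, iteratedFDeriv_sub (by exact (hg.comp hf).of_le (by exact_mod_cast le_top)) contDiff_const]
    rw [Pi.sub_apply, iteratedFDeriv_const_of_ne (by omega)]
    simp
  rw [e]
  have := norm_iteratedFDeriv_comp_le (𝕜 := ℝ) (n := i) (N := ∞) (g := fun y => g y - g (f x)) (f := f)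
    (hg.sub contDiff_const) hf (by exact_mod_cast le_top) x (C := C) (D := D) ?_ ?_
  · refine this.trans ?_
    have a1 : (i.factorial : ℝ) ≤ r.factorial := by exact_mod_cast Nat.factorial_le hi
    have a2 : D ^ i ≤ D ^ r := pow_le_pow_right₀ hD1 hi
    gcongr
  · intro j hj
    rcases Nat.eq_zero_or_pos j with rfl | hj0
    · simpa using hC0
    · have : (fun y => g y - g (f x)) = g - fun _ => g (f x) := rfl
      rw [this, iteratedFDeriv_sub (hg.of_le (by exact_mod_cast le_top)) contDiff_const]
      rw [Pi.sub_apply, iteratedFDeriv_const_of_ne (by omega)]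
      simpa using hC j hj0 (by omega) (f x)
  · intro j hj hji
    refine (hD j hj (by omega) x).trans ?_
    exact le_self_pow₀ hD1 (by omega)

lemma PB.comp {g : ℕ → F → G} {f : ℕ → E → F} (hg : ∀ k, ContDiff ℝ ∞ (g k)) (hf : ∀ k, ContDiff ℝ ∞ (f k))
    (pg : PB g) (pf : PB f) : PB (fun k => g k ∘ f k) := by
  intro r
  obtain ⟨C, p, hC1, hC⟩ := pg r
  obtain ⟨D, p', hD1, hD⟩ := pf r
  have hr : (1:ℝ) ≤ r.factorial := by exact_mod_cast Nat.one_le_iff_ne_zero.2 (Nat.factorial_ne_zero r)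
  refine ⟨(r.factorial : ℝ) * C * D ^ r, p + p' * r, ?_, ?_⟩
  · exact one_le_mul_of_one_le_of_one_le (one_le_mul_of_one_le_of_one_le hr hC1) (one_le_pow₀ hD1)
  · intro k hk i hi1 hir x
    have hk' : (1:ℝ) ≤ k := by exact_mod_cast hk
    refine (comp_bound (hg k) (hf k) (C := C * (k:ℝ)^p) (D := D * (k:ℝ)^p') (by positivity) ?_ (fun i h1 h2 y => hC k hk i h1 h2 y)
      (fun i h1 h2 y => hD k hk i h1 h2 y) hi1 hir x).trans (le_of_eq ?_)
    · exact one_le_mul_of_one_le_of_one_le hD1 (one_le_pow₀ hk')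
    · rw [mul_pow, ← pow_mul, pow_add]; ring

lemma PB.add {g : ℕ → E → F} {f : ℕ → E → F} (hg : ∀ k, ContDiff ℝ ∞ (g k)) (hf : ∀ k, ContDiff ℝ ∞ (f k))
    (pg : PB g) (pf : PB f) : PB (fun k => g k + f k) := by
  intro r
  obtain ⟨C, p, hC1, hC⟩ := pg r
  obtain ⟨D, p', hD1, hD⟩ := pf r
  refine ⟨C + D, p + p', by linarith, ?_⟩
  intro k hk i hi1 hir x
  have hk' : (1:ℝ) ≤ k := by exact_mod_cast hk
  rw [iteratedFDeriv_add ((hg k).of_le (by exact_mod_cast le_top)) ((hf k).of_le (by exact_mod_cast le_top))]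
  refine (norm_add_le _ _).trans ?_
  have h1 := hC k hk i hi1 hir x
  have h2 := hD k hk i hi1 hir x
  have h3 : (k:ℝ)^p ≤ (k:ℝ)^(p+p') := pow_le_pow_right₀ hk' (by omega)
  have h4 : (k:ℝ)^p' ≤ (k:ℝ)^(p+p') := pow_le_pow_right₀ hk' (by omega)
  nlinarith

lemma PB.smul {g : ℕ → E → F} (hg : ∀ k, ContDiff ℝ ∞ (g k)) (pg : PB g) (c : ℕ → ℝ) (C0 : ℝ) (h0 : 1 ≤ C0)
    (hc : ∀ k : ℕ, 1 ≤ k → |c k| ≤ C0 * k) : PB (fun k => c k • g k) := by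
  intro r
  obtain ⟨C, p, hC1, hC⟩ := pg r
  refine ⟨C0 * C, p + 1, one_le_mul_of_one_le_of_one_le h0 hC1, ?_⟩
  intro k hk i hi1 hir x
  rw [iteratedFDeriv_const_smul_apply ((hg k).contDiffAt.of_le (by exact_mod_cast le_top)), norm_smul]
  have h1 := hC k hk i hi1 hir x
  rw [Real.norm_eq_abs, pow_succ]
  calc |c k| * _ ≤ (C0 * k) * (C * (k:ℝ)^p) := mul_le_mul (hc k hk) h1 (norm_nonneg _) (by positivity)
    _ = _ := by ring

lemma PB.const {f : E → F} (h : ∀ i, 1 ≤ i → ∃ C, ∀ x, ‖iteratedFDeriv ℝ i f x‖ ≤ C) : PB (fun _ => f) := by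
  intro r
  choose! C hC using h
  refine ⟨1 + ∑ i ∈ Finset.range (r+1), |C i|, 0, ?_, ?_⟩
  · have : 0 ≤ ∑ i ∈ Finset.range (r+1), |C i| := Finset.sum_nonneg fun _ _ => abs_nonneg _
    linarith
  · intro k hk i hi1 hir x
    have h1 : |C i| ≤ ∑ i ∈ Finset.range (r+1), |C i| :=
      Finset.single_le_sum (f := fun i => |C i|) (fun _ _ => abs_nonneg _) (Finset.mem_range.2 (by omega))
    have := (hC i hi1 x).trans (le_abs_self _)
    rw [pow_zero]
    linarith

lemma PB.clm (L : E →L[ℝ] F) : PB (fun _ => (L : E → F)) := by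
  apply PB.const
  intro i hi
  obtain ⟨j, rfl⟩ : ∃ j, i = j + 1 := ⟨i - 1, by omega⟩
  refine ⟨‖L‖, fun x => ?_⟩
  rw [← norm_iteratedFDeriv_fderiv]
  have : fderiv ℝ (L : E → F) = fun _ => L := by
    funext y; exact L.fderiv
  rw [this]
  rcases Nat.eq_zero_or_pos j with rfl | hj
  · simp
  · rw [iteratedFDeriv_const_of_ne (by omega)]
    simp

/-- Each member of a `PB` family has bounded derivatives. -/
lemma PB.bdd {f : ℕ → E → F} (h : PB f) {k : ℕ} (hk : 1 ≤ k) : ∀ i, 1 ≤ i → ∃ C, ∀ x, ‖iteratedFDeriv ℝ i (f k) x‖ ≤ C := by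
  intro i hi
  obtain ⟨C, p, _, hC⟩ := h i
  exact ⟨_, fun x => hC k hk i hi le_rfl x⟩

end PB

/-- Smoothed sawtooth functions. -/
structure Saw (η : ℝ) where
  s : ℝ → ℝ
  smooth : ContDiff ℝ ∞ s
  per : ∀ (x : ℝ) (m : ℤ), s (x + m) = s x
  nonneg : ∀ x, 0 ≤ s x
  le_one : ∀ x, s x ≤ 1
  eq : ∀ x, η ≤ x → x ≤ 1 - η → s x = x

lemma Saw.good {η : ℝ} (S : Saw η) (x : ℝ) (h : η ≤ ‖(x : Torus1)‖) : (S.s x : Torus1) = x := by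
  rw [AddCircle.norm_eq] at h
  simp only [inv_one, one_mul, mul_one] at h
  have h1 : |x - round x| ≤ |x - ⌊x⌋| := by simpa using round_le x ⌊x⌋
  have h2 : |x - round x| ≤ |x - (⌊x⌋ + 1 : ℤ)| := round_le x (⌊x⌋ + 1)
  have h3 := Int.floor_le x
  have h4 := Int.lt_floor_add_one x
  rw [abs_of_nonneg (by linarith : 0 ≤ x - ⌊x⌋)] at h1
  push_cast at h2
  rw [abs_of_nonpos (by linarith : x - (⌊x⌋ + 1) ≤ 0)] at h2
  have e : S.s x = x - ⌊x⌋ := by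
    rw [← S.eq (x - ⌊x⌋) (by linarith) (by linarith)]
    conv_lhs => rw [show x = (x - ⌊x⌋) + (⌊x⌋ : ℝ) by ring]
    exact S.per _ _
  rw [e, coe_eq_iff]
  exact ⟨-⌊x⌋, by push_cast; ring⟩

lemma Saw.bdd {η : ℝ} (S : Saw η) (i : ℕ) : ∃ C, ∀ x, ‖iteratedFDeriv ℝ i S.s x‖ ≤ C := by
  have hc : Continuous (iteratedFDeriv ℝ i S.s) := S.smooth.continuous_iteratedFDeriv (by exact_mod_cast le_top)
  obtain ⟨C, hC⟩ := (isCompact_Icc (a := (0:ℝ)) (b := 1)).exists_bound_of_continuousOn hc.continuousOn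
  refine ⟨C, fun x => ?_⟩
  have h1 : iteratedFDeriv ℝ i S.s x = iteratedFDeriv ℝ i S.s (Int.fract x) := by
    have : (fun z => S.s (z + (⌊x⌋ : ℝ))) = S.s := by funext z; exact S.per z _
    conv_rhs => rw [← this]
    rw [iteratedFDeriv_comp_add_right, Int.fract_add_floor]
  rw [h1]
  exact hC _ ⟨Int.fract_nonneg x, (Int.fract_lt_one x).le⟩

lemma exists_saw (η : ℝ) (h0 : 0 < η) (h1 : η ≤ 1/4) : Nonempty (Saw η) := by
  let ρ : ℝ → ℝ := fun t => Real.smoothTransition ((t - η/2) / (η/2)) * Real.smoothTransition ((1 - η/2 - t) / (η/2))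
  have hρs : ContDiff ℝ ∞ ρ := by
    apply ContDiff.mul
    · exact Real.smoothTransition.contDiff.comp (by fun_prop)
    · exact Real.smoothTransition.contDiff.comp (by fun_prop)
  have hρ0 : ∀ t, 0 ≤ ρ t := fun t => mul_nonneg (Real.smoothTransition.nonneg _) (Real.smoothTransition.nonneg _)
  have hρ1 : ∀ t, ρ t ≤ 1 := fun t => mul_le_one₀ (Real.smoothTransition.le_one _) (Real.smoothTransition.nonneg _) (Real.smoothTransition.le_one _)
  have hρa : ∀ t, t ≤ η/2 → ρ t = 0 := by
    intro t ht
    have : Real.smoothTransition ((t - η/2) / (η/2)) = 0 :=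
      Real.smoothTransition.zero_of_nonpos (div_nonpos_of_nonpos_of_nonneg (by linarith) (by linarith))
    simp [ρ, this]
  have hρb : ∀ t, 1 - η/2 ≤ t → ρ t = 0 := by
    intro t ht
    have : Real.smoothTransition ((1 - η/2 - t) / (η/2)) = 0 :=
      Real.smoothTransition.zero_of_nonpos (div_nonpos_of_nonpos_of_nonneg (by linarith) (by linarith))
    simp [ρ, this]
  have hρc : ∀ t, η ≤ t → t ≤ 1 - η → ρ t = 1 := by
    intro t ht ht'
    have a : Real.smoothTransition ((t - η/2) / (η/2)) = 1 :=
      Real.smoothTransition.one_of_one_le (by rw [le_div_iff₀ (by linarith)]; linarith)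
    have b : Real.smoothTransition ((1 - η/2 - t) / (η/2)) = 1 :=
      Real.smoothTransition.one_of_one_le (by rw [le_div_iff₀ (by linarith)]; linarith)
    simp [ρ, a, b]
  refine ⟨⟨fun t => Int.fract t * ρ (Int.fract t), ?_, ?_, ?_, ?_, ?_⟩⟩
  · rw [contDiff_iff_contDiffAt]
    intro x
    by_cases hx : Int.fract x = 0
    · -- near an integer the function vanishes
      have : (fun t => Int.fract t * ρ (Int.fract t)) =ᶠ[𝓝 x] fun _ => 0 := by
        have hx' : x = ⌊x⌋ := by
          have := Int.fract_add_floor x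
          rw [hx] at this; linarith
        filter_upwards [Metric.ball_mem_nhds x (by linarith : 0 < η/2)] with t ht
        rw [Metric.mem_ball, Real.dist_eq, abs_lt] at ht
        by_cases htx : x ≤ t
        · have hf : ⌊t⌋ = ⌊x⌋ := by
            rw [Int.floor_eq_iff]; constructor <;> linarith
          rw [hρa (Int.fract t), mul_zero]
          rw [← Int.self_sub_floor, hf]; linarith
        · have hf : ⌊t⌋ = ⌊x⌋ - 1 := by
            rw [Int.floor_eq_iff]; push_cast; constructor <;> linarith
          rw [hρb (Int.fract t), mul_zero]
          rw [← Int.self_sub_floor, hf]; push_cast; linarith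
      exact contDiffAt_const.congr_of_eventuallyEq this
    · have hpos : 0 < Int.fract x := lt_of_le_of_ne (Int.fract_nonneg x) (Ne.symm hx)
      have hlt := Int.fract_lt_one x
      rw [← Int.self_sub_floor] at hpos hlt
      have : (fun t => Int.fract t * ρ (Int.fract t)) =ᶠ[𝓝 x] fun t => (t - ⌊x⌋) * ρ (t - ⌊x⌋) := by
        filter_upwards [Ioo_mem_nhds (by linarith : (⌊x⌋ : ℝ) < x) (by linarith : x < ⌊x⌋ + 1)] with t ht
        have hf : ⌊t⌋ = ⌊x⌋ := by
          rw [Int.floor_eq_iff]; exact ⟨ht.1.le, ht.2⟩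
        rw [← Int.self_sub_floor, hf]
      refine ContDiffAt.congr_of_eventuallyEq ?_ this
      exact ContDiff.contDiffAt (ContDiff.mul (by fun_prop) (hρs.comp (by fun_prop)))
  · intro x m
    simp
  · intro x
    exact mul_nonneg (Int.fract_nonneg x) (hρ0 _)
  · intro x
    exact mul_le_one₀ (Int.fract_lt_one x).le (hρ0 _) (hρ1 _)
  · intro x hx1 hx2
    have : Int.fract x = x := Int.fract_eq_self.2 ⟨by linarith, by linarith⟩
    simp only [this]
    rw [hρc x hx1 hx2, mul_one]

end

end AbC
end


section
open MeasureTheory Filter Set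
open scoped Topology ENNReal NNReal ContDiff

namespace AbC

noncomputable section

lemma mapA_contDiff {f : ℝ → ℝ} (hf : ContDiff ℝ ∞ f) : ContDiff ℝ ∞ (mapA f) := by
  unfold mapA
  exact contDiff_fst.prodMk (contDiff_snd.add (hf.comp contDiff_fst))

lemma mapB_contDiff {f : ℝ → ℝ} (hf : ContDiff ℝ ∞ f) : ContDiff ℝ ∞ (mapB f) := by
  unfold mapB
  exact (contDiff_fst.add (hf.comp contDiff_snd)).prodMk contDiff_snd

lemma PB_scal {η : ℝ} (S : Saw η) (Q : ℝ) (c : ℕ → ℝ) (C0 : ℝ) (h0 : 1 ≤ C0) (hc : ∀ k : ℕ, 1 ≤ k → |c k| ≤ C0 * k) :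
    PB (fun k => fun x : ℝ => c k * S.s (Q * x)) := by
  have h1 : PB (fun _ : ℕ => S.s) := PB.const fun i _ => S.bdd i
  have h2 : PB (fun k => c k • S.s) := PB.smul (fun _ => S.smooth) h1 c C0 h0 hc
  have h3 : PB (fun _ : ℕ => ((Q • ContinuousLinearMap.id ℝ ℝ : ℝ →L[ℝ] ℝ) : ℝ → ℝ)) := PB.clm _
  have e : (fun k => fun x : ℝ => c k * S.s (Q * x)) =
      fun k => (c k • S.s) ∘ ((Q • ContinuousLinearMap.id ℝ ℝ : ℝ →L[ℝ] ℝ) : ℝ → ℝ) := by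
    funext k x
    simp
  rw [e]
  refine PB.comp (fun k => ?_) (fun _ => ContinuousLinearMap.contDiff _) h2 h3
  exact S.smooth.const_smul (c k)

lemma PB_mapA (f : ℕ → ℝ → ℝ) (hf : ∀ k, ContDiff ℝ ∞ (f k)) (pf : PB f) : PB (fun k => mapA (f k)) := by
  have h1 : PB (fun _ : ℕ => ((ContinuousLinearMap.id ℝ E2 : E2 →L[ℝ] E2) : E2 → E2)) := PB.clm _
  have h2 : PB (fun _ : ℕ => ((ContinuousLinearMap.fst ℝ ℝ ℝ : E2 →L[ℝ] ℝ) : E2 → ℝ)) := PB.clm _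
  have h3 : PB (fun _ : ℕ => ((ContinuousLinearMap.inr ℝ ℝ ℝ : ℝ →L[ℝ] E2) : ℝ → E2)) := PB.clm _
  have h4 := PB.comp hf (fun _ => ContinuousLinearMap.contDiff _) pf h2
  have h5 := PB.comp (fun _ => ContinuousLinearMap.contDiff _) (fun k => (hf k).comp (ContinuousLinearMap.contDiff _)) h3 h4
  have h6 := PB.add (fun _ => ContinuousLinearMap.contDiff _)
    (fun k => (ContinuousLinearMap.contDiff _).comp ((hf k).comp (ContinuousLinearMap.contDiff _))) h1 h5
  convert h6 using 1
  funext k p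
  ext <;> simp [mapA]

lemma PB_mapB (f : ℕ → ℝ → ℝ) (hf : ∀ k, ContDiff ℝ ∞ (f k)) (pf : PB f) : PB (fun k => mapB (f k)) := by
  have h1 : PB (fun _ : ℕ => ((ContinuousLinearMap.id ℝ E2 : E2 →L[ℝ] E2) : E2 → E2)) := PB.clm _
  have h2 : PB (fun _ : ℕ => ((ContinuousLinearMap.snd ℝ ℝ ℝ : E2 →L[ℝ] ℝ) : E2 → ℝ)) := PB.clm _
  have h3 : PB (fun _ : ℕ => ((ContinuousLinearMap.inl ℝ ℝ ℝ : ℝ →L[ℝ] E2) : ℝ → E2)) := PB.clm _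
  have h4 := PB.comp hf (fun _ => ContinuousLinearMap.contDiff _) pf h2
  have h5 := PB.comp (fun _ => ContinuousLinearMap.contDiff _) (fun k => (hf k).comp (ContinuousLinearMap.contDiff _)) h3 h4
  have h6 := PB.add (fun _ => ContinuousLinearMap.contDiff _)
    (fun k => (ContinuousLinearMap.contDiff _).comp ((hf k).comp (ContinuousLinearMap.contDiff _))) h1 h5
  convert h6 using 1
  funext k p
  ext <;> simp [mapB]

/-- A stage of the construction. -/
structure St where
  H : E2 → E2
  G : E2 → E2
  q : ℕ
  a : ℤ
  hq : 2 ≤ q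
  HG : ∀ p, H (G p) = p
  GH : ∀ p, G (H p) = p
  sH : ContDiff ℝ ∞ H
  sG : ContDiff ℝ ∞ G
  bH : ∀ i, 1 ≤ i → ∃ C, ∀ x, ‖iteratedFDeriv ℝ i H x‖ ≤ C
  bG : ∀ i, 1 ≤ i → ∃ C, ∀ x, ‖iteratedFDeriv ℝ i G x‖ ≤ C
  eH : Equiv2 H
  eG : Equiv2 G
  disp : ∃ c : ℕ, ∀ p, |(H p).2 - p.2| ≤ c
  mH : MeasurePreserving (desc H) (volume : Measure Torus2) volume
  mG : MeasurePreserving (desc G) (volume : Measure Torus2) volume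

/-- The rotation number of a stage. -/
def St.α (S : St) : ℝ := S.a / S.q

lemma St.qpos (S : St) : (0 : ℝ) < S.q := by
  have := S.hq
  exact_mod_cast (by omega : 0 < S.q)

/-- The conjugated rotation flow. -/
def St.F (S : St) (t : ℝ) : E2 → E2 := fun p => S.H (rot t (S.G p))

/-- vertical shear profile -/
def fA {η : ℝ} (s : Saw η) (q k : ℕ) : ℝ → ℝ := fun x => k * s.s (q * x)
/-- horizontal shear profile -/
def fB {η : ℝ} (s : Saw η) (q k : ℕ) : ℝ → ℝ := fun y => (1 / (k * q)) * s.s (1 * y)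

section
variable {η : ℝ} (s : Saw η) (q k : ℕ)

lemma fA_cd : ContDiff ℝ ∞ (fA s q k) :=
  contDiff_const.mul (s.smooth.comp (contDiff_const.mul contDiff_id))
lemma fB_cd : ContDiff ℝ ∞ (fB s q k) :=
  contDiff_const.mul (s.smooth.comp (contDiff_const.mul contDiff_id))
lemma fA_per (x : ℝ) (m : ℤ) : fA s q k (x + m) = fA s q k x := by
  unfold fA
  have := s.per (q * x) (q * m)
  push_cast at this
  rw [mul_add, this]
lemma fB_per (x : ℝ) (m : ℤ) : fB s q k (x + m) = fB s q k x := by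
  unfold fB
  rw [one_mul, one_mul, s.per]
lemma fA_shift (hq : (0:ℝ) < q) (x : ℝ) (m : ℤ) : fA s q k (x + m / q) = fA s q k x := by
  unfold fA
  rw [mul_add, mul_div_cancel₀ _ hq.ne', s.per]

lemma fA_nonneg (x : ℝ) : 0 ≤ fA s q k x := mul_nonneg (by positivity) (s.nonneg _)
lemma fA_le (x : ℝ) : fA s q k x ≤ k := by
  unfold fA
  exact mul_le_of_le_one_right (by positivity) (s.le_one _)
lemma fB_nonneg (x : ℝ) : 0 ≤ fB s q k x := mul_nonneg (by positivity) (s.nonneg _)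
lemma fB_le (x : ℝ) : fB s q k x ≤ 1 / (k * q) := by
  unfold fB
  exact mul_le_of_le_one_right (by positivity) (s.le_one _)
end

lemma PB_fA {η : ℝ} (s : Saw η) (q : ℕ) : PB (fun k => fA s q k) :=
  PB_scal s q (fun k => k) 1 le_rfl (fun k _ => by simp)

lemma PB_fA' {η : ℝ} (s : Saw η) (q : ℕ) : PB (fun k => fun x => - fA s q k x) := by
  have := PB_scal s q (fun k => -(k:ℝ)) 1 le_rfl (fun k _ => by simp)
  convert this using 3
  unfold fA; ring

lemma inv_le_k {q k : ℕ} (hq : 2 ≤ q) (hk : 1 ≤ k) : |(1:ℝ) / (k * q)| ≤ 1 * k := by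
  rw [abs_of_nonneg (by positivity), one_mul]
  have h1 : (1:ℝ) ≤ k := by exact_mod_cast hk
  have h2 : (2:ℝ) ≤ q := by exact_mod_cast hq
  rw [div_le_iff₀ (by positivity)]
  nlinarith [mul_self_nonneg ((k:ℝ)-1), mul_nonneg (mul_self_nonneg (k:ℝ)) (by linarith : (0:ℝ) ≤ q - 2)]

lemma PB_fB {η : ℝ} (s : Saw η) (q : ℕ) (hq : 2 ≤ q) : PB (fun k => fB s q k) :=
  PB_scal s 1 (fun k => 1 / (k * q)) 1 le_rfl (fun k hk => inv_le_k hq hk)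

lemma PB_fB' {η : ℝ} (s : Saw η) (q : ℕ) (hq : 2 ≤ q) : PB (fun k => fun x => - fB s q k x) := by
  have := PB_scal s 1 (fun k => -(1 / (k * q : ℝ))) 1 le_rfl (fun k hk => by rw [abs_neg]; exact inv_le_k hq hk)
  convert this using 3
  unfold fB; ring

/-- The conjugating maps. -/
def hH {η : ℝ} (S : St) (s : Saw η) (k : ℕ) : E2 → E2 :=
  S.H ∘ (mapA (fA s S.q k) ∘ mapB (fun y => - fB s S.q k y))
/-- The inverse of the conjugating maps. -/
def hG {η : ℝ} (S : St) (s : Saw η) (k : ℕ) : E2 → E2 :=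
  (mapB (fB s S.q k) ∘ mapA (fun y => - fA s S.q k y)) ∘ S.G

lemma PB_hH {η : ℝ} (S : St) (s : Saw η) : PB (fun k => hH S s k) :=
  PB.comp (fun _ => S.sH) (fun k => (mapA_contDiff (fA_cd s S.q k)).comp (mapB_contDiff (fB_cd s S.q k).neg))
    (PB.const S.bH) (PB.comp (fun k => mapA_contDiff (fA_cd s S.q k)) (fun k => mapB_contDiff (fB_cd s S.q k).neg)
      (PB_mapA _ (fun k => fA_cd s S.q k) (PB_fA s S.q)) (PB_mapB _ (fun k => (fB_cd s S.q k).neg) (PB_fB' s S.q S.hq)))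

lemma PB_hG {η : ℝ} (S : St) (s : Saw η) : PB (fun k => hG S s k) :=
  PB.comp (fun k => (mapB_contDiff (fB_cd s S.q k)).comp (mapA_contDiff (fA_cd s S.q k).neg)) (fun _ => S.sG)
    (PB.comp (fun k => mapB_contDiff (fB_cd s S.q k)) (fun k => mapA_contDiff (fA_cd s S.q k).neg)
      (PB_mapB _ (fun k => fB_cd s S.q k) (PB_fB s S.q S.hq)) (PB_mapA _ (fun k => (fA_cd s S.q k).neg) (PB_fA' s S.q)))
      (PB.const S.bG)

lemma hH_cd {η : ℝ} (S : St) (s : Saw η) (k : ℕ) : ContDiff ℝ ∞ (hH S s k) :=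
  S.sH.comp ((mapA_contDiff (fA_cd s S.q k)).comp (mapB_contDiff (fB_cd s S.q k).neg))
lemma hG_cd {η : ℝ} (S : St) (s : Saw η) (k : ℕ) : ContDiff ℝ ∞ (hG S s k) :=
  ((mapB_contDiff (fB_cd s S.q k)).comp (mapA_contDiff (fA_cd s S.q k).neg)).comp S.sG

/-- The next stage; the parameter is positive. -/
def next {η : ℝ} (S : St) (s : Saw η) (k : ℕ) (hk : 1 ≤ k) : St where
  H := hH S s k
  G := hG S s k
  q := S.q * 4 ^ k
  a := S.a * 4 ^ k + 1
  hq := by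
    have := S.hq
    have h4 : 1 ≤ 4 ^ k := Nat.one_le_pow _ _ (by norm_num)
    nlinarith
  HG := by
    intro p
    simp only [hH, hG, Function.comp]
    rw [mapB_neg', mapA_neg, S.HG]
  GH := by
    intro p
    simp only [hH, hG, Function.comp]
    rw [S.GH, mapA_neg', mapB_neg]
  sH := hH_cd S s k
  sG := hG_cd S s k
  bH := (PB_hH S s).bdd hk
  bG := (PB_hG S s).bdd hk
  eH := S.eH.comp ((mapA_equiv (fA_per s S.q k)).comp (mapB_equiv fun x m => by rw [fB_per]))
  eG := ((mapB_equiv (fB_per s S.q k)).comp (mapA_equiv fun x m => by rw [fA_per])).comp S.eG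
  disp := by
    obtain ⟨c, hc⟩ := S.disp
    refine ⟨c + k, fun p => ?_⟩
    have h1 := hc (mapA (fA s S.q k) (mapB (fun y => - fB s S.q k y) p))
    simp only [hH, Function.comp]
    have e : (mapA (fA s S.q k) (mapB (fun y => - fB s S.q k y) p)).2 = p.2 + fA s S.q k (p.1 + - fB s S.q k p.2) := rfl
    have h2 := fA_nonneg s S.q k (p.1 + - fB s S.q k p.2)
    have h3 := fA_le s S.q k (p.1 + - fB s S.q k p.2)
    rw [e] at h1
    rw [abs_le] at h1 ⊢
    push_cast
    constructor <;> linarith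
  mH := by
    unfold hH
    have e1 := mapA_equiv (fA_per s S.q k)
    have e2 : Equiv2 (mapB (fun y => - fB s S.q k y)) := mapB_equiv fun x m => by rw [fB_per]
    rw [desc_comp S.eH (e1.comp e2), desc_comp e1 e2]
    exact S.mH.comp ((mp_mapA (fA_per s S.q k) (fA_cd s S.q k).continuous).comp
      (mp_mapB (fun x m => by rw [fB_per]) (fB_cd s S.q k).neg.continuous))
  mG := by
    unfold hG
    have e1 := mapB_equiv (fB_per s S.q k)
    have e2 : Equiv2 (mapA (fun y => - fA s S.q k y)) := mapA_equiv fun x m => by rw [fA_per]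
    rw [desc_comp (e1.comp e2) S.eG, desc_comp e1 e2]
    exact ((mp_mapB (fB_per s S.q k) (fB_cd s S.q k).continuous).comp
      (mp_mapA (fun x m => by rw [fA_per]) (fA_cd s S.q k).neg.continuous)).comp S.mG

lemma St.F_cd (S : St) (t : ℝ) : ContDiff ℝ ∞ (S.F t) := by
  unfold St.F rot
  exact S.sH.comp (S.sG.add contDiff_const)

lemma St.F_equiv (S : St) (t : ℝ) : Equiv2 (S.F t) := S.eH.comp ((rot_equiv t).comp S.eG)

lemma St.F_add (S : St) (t u : ℝ) (p : E2) : S.F t (S.F u p) = S.F (t + u) p := by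
  simp only [St.F, S.GH, rot_rot]

lemma St.F_zero (S : St) (p : E2) : S.F 0 p = p := by
  have : rot 0 (S.G p) = S.G p := by
    have h : (((0:ℝ), (0:ℝ)) : E2) = 0 := rfl
    simp [rot, h]
  simp only [St.F, this, S.HG]

lemma St.F_iter (S : St) (t : ℝ) (i : ℕ) (p : E2) : (S.F t)^[i] p = S.F (i * t) p := by
  induction i with
  | zero => simp [S.F_zero]
  | succ n ih =>
    rw [Function.iterate_succ_apply', ih, S.F_add]
    congr 1
    push_cast; ring

lemma St.mF (S : St) (t : ℝ) : MeasurePreserving (desc (S.F t)) (volume : Measure Torus2) volume := by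
  have : S.F t = S.H ∘ (rot t ∘ S.G) := rfl
  rw [this, desc_comp S.eH ((rot_equiv t).comp S.eG), desc_comp (rot_equiv t) S.eG]
  exact S.mH.comp ((mp_rot t).comp S.mG)

lemma mapB_rot (g : ℝ → ℝ) (t : ℝ) (p : E2) : mapB g (rot t p) = rot t (mapB g p) := by
  ext <;> simp [mapB, rot]; ring

section
variable {η : ℝ} (S : St) (s : Saw η) (k : ℕ) (hk : 1 ≤ k)

lemma next_α : (next S s k hk).α = S.α + 1 / (S.q * 4 ^ k) := by
  have := S.qpos
  simp only [St.α, next]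
  push_cast
  field_simp

/-- `F` of the next stage in terms of the vertical shear only. -/
lemma next_F (t : ℝ) (p : E2) : (next S s k hk).F t p =
    S.H (mapA (fA s S.q k) (rot t (mapA (fun x => - fA s S.q k x) (S.G p)))) := by
  simp only [St.F, next, hH, hG, Function.comp]
  rw [mapB_rot, mapB_neg']

lemma next_F_int (m : ℤ) : (next S s k hk).F (m / S.q) = S.F (m / S.q) := by
  funext p
  rw [next_F]
  have : rot (m / S.q) (mapA (fun x => - fA s S.q k x) (S.G p)) = mapA (fun x => - fA s S.q k x) (rot (m / S.q) (S.G p)) := by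
    ext
    · simp [rot, mapA]
    · simp only [rot, mapA, Prod.snd_add, Prod.fst_add, add_zero]
      rw [fA_shift s S.q k S.qpos]
  rw [this, mapA_neg]
  rfl

lemma next_F_α (m : ℤ) : (next S s k hk).F (m * S.α) = S.F (m * S.α) := by
  have : (m : ℝ) * S.α = ((m * S.a : ℤ) : ℝ) / S.q := by
    unfold St.α; push_cast; ring
  rw [this]
  exact next_F_int S s k hk _

/-- Horizontal displacement of the next stage. -/
lemma next_G_fst (p : E2) : |((next S s k hk).G p).1 - (S.G p).1| ≤ 1 / (k * S.q) := by
  have e : ((next S s k hk).G p).1 = (S.G p).1 + fB s S.q k ((S.G p).2 + - fA s S.q k (S.G p).1) := rfl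
  rw [e, add_sub_cancel_left, abs_of_nonneg (fB_nonneg _ _ _ _)]
  exact fB_le _ _ _ _

end

/-- Lipschitz bounds from derivative bounds. -/
lemma lip_of_bound {f : E2 → E2} (hf : ContDiff ℝ ∞ f) {C : ℝ} (hC : ∀ x, ‖iteratedFDeriv ℝ 1 f x‖ ≤ C) (p p' : E2) :
    dist (f p) (f p') ≤ C * dist p p' := by
  rw [dist_eq_norm, dist_eq_norm]
  refine Convex.norm_image_sub_le_of_norm_fderiv_le (𝕜 := ℝ) (s := univ) ?_ ?_ convex_univ trivial trivial
  · intro x _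
    exact hf.differentiable (by simp) x
  · intro x _
    rw [← norm_iteratedFDeriv_one]
    exact hC x

lemma St.lip (S : St) : ∃ L : ℝ, 1 ≤ L ∧ ∀ p p', dist (S.H p) (S.H p') ≤ L * dist p p' := by
  obtain ⟨C, hC⟩ := S.bH 1 le_rfl
  refine ⟨max C 1, le_max_right _ _, fun p p' => ?_⟩
  exact lip_of_bound S.sH (fun x => (hC x).trans (le_max_left _ _)) p p'

end

end AbC
end


section
open MeasureTheory Filter Set
open scoped Topology ENNReal NNReal ContDiff

namespace AbC

noncomputable section

lemma ev_exp (C : ℝ) (p : ℕ) (δ : ℝ) (hδ : 0 < δ) : ∀ᶠ k : ℕ in atTop, C * (k : ℝ) ^ p * (1/2 : ℝ) ^ k ≤ δ := by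
  have h := tendsto_pow_const_mul_const_pow_of_abs_lt_one p (r := (1/2 : ℝ)) (by rw [abs_of_pos] <;> norm_num)
  have h2 := h.const_mul C
  rw [mul_zero] at h2
  filter_upwards [h2.eventually (gt_mem_nhds hδ)] with k hk
  rw [mul_assoc]
  exact hk.le

lemma four_inv (k : ℕ) : (1 : ℝ) / 4 ^ k = (1/2) ^ k * (1/2) ^ k := by
  rw [← mul_pow, one_div, ← inv_pow]; norm_num

lemma half_pow_le_one (k : ℕ) : (1/2 : ℝ) ^ k ≤ 1 := pow_le_one₀ (by norm_num) (by norm_num)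

section
variable {η : ℝ} (S : St) (s : Saw η)

lemma dα_le (k : ℕ) : (0:ℝ) ≤ 1 / (S.q * 4 ^ k) ∧ (1:ℝ) / (S.q * 4 ^ k) ≤ (1/2) ^ k * (1/2) ^ k := by
  have h1 := S.qpos
  refine ⟨by positivity, ?_⟩
  rw [← four_inv]
  apply one_div_le_one_div_of_le (by positivity)
  have : (1:ℝ) ≤ S.q := by
    have := S.hq
    exact_mod_cast (by omega : 1 ≤ S.q)
  have h4 : (0:ℝ) < 4 ^ k := by positivity
  nlinarith

lemma diff_bound {f : E2 → E2} (hf : ContDiff ℝ ∞ f) {n : ℕ} {C : ℝ}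
    (hC : ∀ i, 1 ≤ i → i ≤ n + 1 → ∀ x, ‖iteratedFDeriv ℝ i f x‖ ≤ C) (a b : E2) {i : ℕ} (hi : i ≤ n) (x : E2) :
    ‖iteratedFDeriv ℝ i (fun u => f (u + a) - f (u + b)) x‖ ≤ C * ‖a - b‖ := by
  have e : (fun u => f (u + a) - f (u + b)) = (fun u => f (u + a)) - (fun u => f (u + b)) := rfl
  have ha : ContDiff ℝ i (fun u => f (u + a)) := (hf.of_le (by exact_mod_cast le_top)).comp (contDiff_id.add contDiff_const)
  have hb : ContDiff ℝ i (fun u => f (u + b)) := (hf.of_le (by exact_mod_cast le_top)).comp (contDiff_id.add contDiff_const)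
  rw [e, iteratedFDeriv_sub ha hb, Pi.sub_apply, iteratedFDeriv_comp_add_right, iteratedFDeriv_comp_add_right]
  have := Convex.norm_image_sub_le_of_norm_fderiv_le (𝕜 := ℝ) (s := univ) (f := iteratedFDeriv ℝ i f) (C := C)
    (x := x + b) (y := x + a) ?_ ?_ convex_univ trivial trivial
  · simpa using this
  · intro y _
    exact hf.differentiable_iteratedFDeriv (by exact_mod_cast WithTop.coe_lt_top i) y
  · intro y _
    rw [norm_fderiv_iteratedFDeriv]
    exact hC _ (by omega) (by omega) y

lemma ev_smooth (n : ℕ) : ∀ᶠ k : ℕ in atTop, ∀ hk : 1 ≤ k, ∀ m : ℤ, |m| ≤ 1 → ∀ i ≤ n, ∀ x,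
    ‖iteratedFDeriv ℝ i (fun p => (next S s k hk).F (m * (next S s k hk).α) p - S.F (m * S.α) p) x‖ ≤ (1/2) ^ n := by
  obtain ⟨C, p, hC1, hC⟩ := PB_hH S s (n + 1)
  obtain ⟨D, p', hD1, hD⟩ := PB_hG S s n
  filter_upwards [ev_exp (n.factorial * C * D ^ n) (p + p' * n) ((1/2)^n) (by positivity)] with k hk hk1 m hm i hi x
  rw [← next_F_α S s k hk1]
  set N := next S s k hk1 with hN
  have hk' : (1:ℝ) ≤ k := by exact_mod_cast hk1
  have e : (fun p => N.F (m * N.α) p - N.F (m * S.α) p) =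
    (fun u => N.H (u + (m * N.α, 0)) - N.H (u + (m * S.α, 0))) ∘ N.G := rfl
  rw [e]
  have hD' : 1 ≤ D * (k:ℝ)^p' := one_le_mul_of_one_le_of_one_le hD1 (one_le_pow₀ hk')
  have b := norm_iteratedFDeriv_comp_le (𝕜 := ℝ) (n := i) (N := ∞)
    (g := fun u => N.H (u + (m * N.α, 0)) - N.H (u + (m * S.α, 0))) (f := N.G)
    ((N.sH.comp (contDiff_id.add contDiff_const)).sub (N.sH.comp (contDiff_id.add contDiff_const)))
    N.sG (by exact_mod_cast le_top) x (C := C * (k:ℝ)^p * ((1/2)^k * (1/2)^k)) (D := D * (k:ℝ)^p') ?_ ?_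
  · refine b.trans (le_trans ?_ hk)
    have a1 : (i.factorial : ℝ) ≤ n.factorial := by exact_mod_cast Nat.factorial_le hi
    have a2 : (D * (k:ℝ)^p') ^ i ≤ (D * (k:ℝ)^p') ^ n := pow_le_pow_right₀ hD' hi
    have a3 : ((1/2 : ℝ)^k * (1/2)^k) ≤ (1/2)^k := mul_le_of_le_one_left (by positivity) (half_pow_le_one k)
    calc (i.factorial : ℝ) * (C * (k:ℝ)^p * ((1/2)^k * (1/2)^k)) * (D * (k:ℝ)^p') ^ i
        ≤ (n.factorial : ℝ) * (C * (k:ℝ)^p * ((1/2)^k)) * (D * (k:ℝ)^p') ^ n := by gcongr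
      _ = _ := by rw [mul_pow, ← pow_mul, pow_add]; ring
  · intro j hj
    refine (diff_bound N.sH (n := n) (C := C * (k:ℝ)^p) (fun i h1 h2 y => hC k hk1 i h1 h2 y) _ _ (hj.trans hi) _).trans ?_
    apply mul_le_mul_of_nonneg_left _ (by positivity)
    have e2 : (((m:ℝ) * N.α, (0:ℝ)) : E2) - ((m:ℝ) * S.α, (0:ℝ)) = ((m:ℝ) * (1 / (S.q * 4 ^ k)), (0:ℝ)) := by
      ext
      · simp only [Prod.fst_sub]
        rw [hN, next_α]; ring
      · simp
    rw [e2, Prod.norm_def]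
    simp only [norm_zero]
    apply max_le _ (by positivity)
    rw [norm_mul, Real.norm_eq_abs, Real.norm_eq_abs, abs_of_nonneg (dα_le S k).1]
    have hm' : |(m:ℝ)| ≤ 1 := by exact_mod_cast hm
    calc |(m:ℝ)| * (1 / (S.q * 4 ^ k)) ≤ 1 * (1 / (S.q * 4 ^ k)) := mul_le_mul_of_nonneg_right hm' (dα_le S k).1
      _ ≤ _ := by rw [one_mul]; exact (dα_le S k).2
  · intro j hj1 hj
    refine (hD k hk1 j hj1 (hj.trans hi) x).trans ?_
    exact le_self_pow₀ hD' (by omega)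

lemma ev_time (n : ℕ) : ∀ᶠ k : ℕ in atTop, ∀ hk : 1 ≤ k, ∀ i : ℕ, i ≤ 2 ^ k → ∀ p,
    dist ((next S s k hk).F (i * (next S s k hk).α) p) (S.F (i * S.α) p) ≤ (1/2) ^ n := by
  obtain ⟨C, p, hC1, hC⟩ := PB_hH S s 1
  filter_upwards [ev_exp C p ((1/2)^n) (by positivity)] with k hk hk1 i hi x
  have e := next_F_α S s k hk1 (i : ℤ)
  rw [Int.cast_natCast] at e
  rw [← e]
  set N := next S s k hk1 with hN
  refine (lip_of_bound N.sH (C := C * (k:ℝ)^p) (fun x => hC k hk1 1 le_rfl le_rfl x) _ _).trans (le_trans ?_ hk)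
  apply mul_le_mul_of_nonneg_left _ (by positivity)
  have e2 : dist (rot (i * N.α) (N.G x)) (rot (i * S.α) (N.G x)) = i * (1 / (S.q * 4 ^ k)) := by
    unfold rot
    rw [dist_add_left, Prod.dist_eq]
    simp only [dist_self]
    rw [Real.dist_eq, hN, next_α, mul_add, add_sub_cancel_left, abs_of_nonneg (mul_nonneg (by positivity) (dα_le S k).1)]
    exact max_eq_left (mul_nonneg (by positivity) (dα_le S k).1)
  rw [e2]
  have hi' : (i:ℝ) ≤ 2 ^ k := by exact_mod_cast hi
  calc (i:ℝ) * (1 / (S.q * 4 ^ k)) ≤ 2 ^ k * ((1/2) ^ k * (1/2) ^ k) :=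
        mul_le_mul hi' (dα_le S k).2 (dα_le S k).1 (by positivity)
    _ = (1/2)^k := by rw [← mul_assoc, ← mul_pow]; norm_num

/-- Lipschitz bound for the sawtooth. -/
lemma saw_lip : ∃ C : ℝ, 1 ≤ C ∧ ∀ x y, |s.s x - s.s y| ≤ C * |x - y| := by
  obtain ⟨C, hC⟩ := s.bdd 1
  refine ⟨max C 1, le_max_right _ _, fun x y => ?_⟩
  have := Convex.norm_image_sub_le_of_norm_fderiv_le (𝕜 := ℝ) (s := univ) (f := s.s) (C := max C 1)
    (x := y) (y := x) ?_ ?_ convex_univ trivial trivial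
  · exact this
  · intro x _
    exact s.smooth.differentiable (by simp) x
  · intro x _
    rw [← norm_iteratedFDeriv_one]
    exact (hC x).trans (le_max_left _ _)

lemma mapA_lip {C : ℝ} (hC : ∀ x y, |s.s x - s.s y| ≤ C * |x - y|) (hC1 : 1 ≤ C) {q k : ℕ} (hq : 1 ≤ q) (hk : 1 ≤ k) (u v : E2) :
    dist (mapA (fA s q k) u) (mapA (fA s q k) v) ≤ |u.2 - v.2| + k * q * C * |u.1 - v.1| := by
  have hk' : (1:ℝ) ≤ k := by exact_mod_cast hk
  have hq' : (1:ℝ) ≤ q := by exact_mod_cast hq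
  rw [Prod.dist_eq]
  apply max_le
  · simp only [mapA, Real.dist_eq]
    have : (1:ℝ) ≤ k * q * C := one_le_mul_of_one_le_of_one_le (one_le_mul_of_one_le_of_one_le hk' hq') hC1
    nlinarith [abs_nonneg (u.2 - v.2), abs_nonneg (u.1 - v.1)]
  · simp only [mapA, Real.dist_eq]
    have e : u.2 + fA s q k u.1 - (v.2 + fA s q k v.1) = (u.2 - v.2) + k * (s.s (q * u.1) - s.s (q * v.1)) := by
      unfold fA; ring
    rw [e]
    refine (abs_add_le _ _).trans ?_
    rw [abs_mul, abs_of_nonneg (by positivity : (0:ℝ) ≤ k)]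
    have h := hC (q * u.1) (q * v.1)
    rw [← mul_sub, abs_mul, abs_of_nonneg (by positivity : (0:ℝ) ≤ q)] at h
    have := mul_le_mul_of_nonneg_left h (by positivity : (0:ℝ) ≤ k)
    nlinarith

/-- the unipotent form of the next flow on points given by shear coordinates -/
lemma next_F_pt (k : ℕ) (hk : 1 ≤ k) (t : ℝ) (u : E2) :
    (next S s k hk).F t (S.H (mapA (fA s S.q k) u)) = S.H (mapA (fA s S.q k) (rot t u)) := by
  rw [next_F, S.GH, mapA_neg']

lemma equiv_HA (k : ℕ) : Equiv2 (S.H ∘ mapA (fA s S.q k)) := S.eH.comp (mapA_equiv (fA_per s S.q k))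

lemma proj_HA_int (k : ℕ) (u : E2) (m n : ℤ) :
    torusProj (S.H (mapA (fA s S.q k) (u + ((m:ℝ),(n:ℝ))))) = torusProj (S.H (mapA (fA s S.q k) u)) := by
  have := equiv_HA S s k u m n
  simp only [Function.comp] at this
  rw [this, torusProj_add_int]

lemma upper_count : ∃ D : ℕ, 1 ≤ D ∧ ∀ (k : ℕ) (hk : 1 ≤ k), ∀ ε : ℝ, 0 < ε → ε ≤ 1 →
    ∃ Fs : Finset E2, (Fs.card : ℝ) ≤ D * k / ε ^ 2 ∧
      ∀ p, ∃ w ∈ Fs, ∀ t, dist (torusProj ((next S s k hk).F t p)) (torusProj ((next S s k hk).F t w)) < ε := by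
  classical
  obtain ⟨L, hL1, hL⟩ := S.lip
  obtain ⟨C, hC1, hC⟩ := saw_lip s
  have hq1 : 1 ≤ S.q := by have := S.hq; omega
  have hq' : (1:ℝ) ≤ S.q := by exact_mod_cast hq1
  refine ⟨⌈16 * L ^ 2 * S.q * C⌉₊, Nat.one_le_iff_ne_zero.2 (Nat.ceil_pos.2 (by positivity)).ne', ?_⟩
  intro k hk ε hε hε1
  have hk' : (1:ℝ) ≤ k := by exact_mod_cast hk
  set X : ℕ := ⌊3 * L * k * S.q * C / ε⌋₊ + 1 with hX
  set Y : ℕ := ⌊3 * L / ε⌋₊ + 1 with hY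
  have hX1 : 3 * L * k * S.q * C / ε < X := by rw [hX]; push_cast; exact Nat.lt_floor_add_one _
  have hY1 : 3 * L / ε < Y := by rw [hY]; push_cast; exact Nat.lt_floor_add_one _
  have hX2 : (X:ℝ) ≤ 3 * L * k * S.q * C / ε + 1 := by
    rw [hX]; push_cast
    have := Nat.floor_le (by positivity : 0 ≤ 3 * L * k * S.q * C / ε)
    linarith
  have hY2 : (Y:ℝ) ≤ 3 * L / ε + 1 := by
    rw [hY]; push_cast
    have := Nat.floor_le (by positivity : 0 ≤ 3 * L / ε)
    linarith
  have hX0 : (0:ℝ) < X := by rw [hX]; positivity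
  have hY0 : (0:ℝ) < Y := by rw [hY]; positivity
  refine ⟨(Finset.range X ×ˢ Finset.range Y).image
    (fun jl => S.H (mapA (fA s S.q k) ((jl.1 : ℝ) / X, (jl.2 : ℝ) / Y))), ?_, ?_⟩
  · have h1 : (((Finset.range X ×ˢ Finset.range Y).image
      (fun jl => S.H (mapA (fA s S.q k) ((jl.1 : ℝ) / X, (jl.2 : ℝ) / Y)))).card : ℝ) ≤ (X:ℝ) * Y := by
      have := Finset.card_image_le (s := Finset.range X ×ˢ Finset.range Y)
        (f := fun jl => S.H (mapA (fA s S.q k) ((jl.1 : ℝ) / X, (jl.2 : ℝ) / Y)))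
      rw [Finset.card_product, Finset.card_range, Finset.card_range] at this
      exact_mod_cast this
    refine h1.trans ?_
    have hX3 : (X:ℝ) ≤ 4 * L * k * S.q * C / ε := by
      refine hX2.trans ?_
      have : 1 ≤ L * k * S.q * C / ε := by
        rw [le_div_iff₀ hε, one_mul]
        refine hε1.trans ?_
        exact one_le_mul_of_one_le_of_one_le (one_le_mul_of_one_le_of_one_le (one_le_mul_of_one_le_of_one_le hL1 hk') hq') hC1
      calc 3 * L * k * S.q * C / ε + 1 ≤ 3 * L * k * S.q * C / ε + L * k * S.q * C / ε := by linarith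
        _ = _ := by ring
    have hY3 : (Y:ℝ) ≤ 4 * L / ε := by
      refine hY2.trans ?_
      have : 1 ≤ L / ε := by
        rw [le_div_iff₀ hε, one_mul]
        exact hε1.trans hL1
      calc 3 * L / ε + 1 ≤ 3 * L / ε + L / ε := by linarith
        _ = _ := by ring
    calc (X:ℝ) * Y ≤ (4 * L * k * S.q * C / ε) * (4 * L / ε) := by gcongr
      _ = (16 * L ^ 2 * S.q * C) * k / ε ^ 2 := by field_simp; ring
      _ ≤ _ := by
        gcongr
        exact Nat.le_ceil _
  · intro p
    set u := mapA (fun x => - fA s S.q k x) (S.G p) with hu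
    have hp : p = S.H (mapA (fA s S.q k) u) := by rw [hu, mapA_neg, S.HG]
    have key : ∀ (x : ℝ) (N : ℕ), 0 < (N:ℝ) → ∃ j < N, |Int.fract x - (j:ℝ)/N| ≤ 1 / N := by
      intro x N hN
      have h0 := Int.fract_nonneg x
      have h1 := Int.fract_lt_one x
      refine ⟨⌊Int.fract x * N⌋₊, ?_, ?_⟩
      · rw [Nat.floor_lt (by positivity)]
        nlinarith
      · have a1 := Nat.floor_le (by positivity : 0 ≤ Int.fract x * N)
        have a2 := Nat.lt_floor_add_one (Int.fract x * N)
        rw [abs_of_nonneg]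
        · rw [sub_le_iff_le_add, ← add_div, le_div_iff₀ hN]; linarith
        · rw [sub_nonneg, div_le_iff₀ hN]; exact a1
    obtain ⟨j, hj, hj'⟩ := key u.1 X hX0
    obtain ⟨l, hl, hl'⟩ := key u.2 Y hY0
    refine ⟨S.H (mapA (fA s S.q k) ((j : ℝ) / X, (l : ℝ) / Y)), ?_, ?_⟩
    · exact Finset.mem_image.2 ⟨(j, l), Finset.mem_product.2 ⟨Finset.mem_range.2 hj, Finset.mem_range.2 hl⟩, rfl⟩
    · intro t
      rw [hp, next_F_pt, next_F_pt]
      have e : rot t u = rot t (Int.fract u.1, Int.fract u.2) + (((⌊u.1⌋ : ℤ) : ℝ), ((⌊u.2⌋ : ℤ) : ℝ)) := by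
        have a := Int.fract_add_floor u.1
        have b := Int.fract_add_floor u.2
        ext
        · simp only [rot, Prod.fst_add]; linarith
        · simp only [rot, Prod.snd_add]; linarith
      rw [e, proj_HA_int]
      refine (dist_proj_le _ _).trans_lt ((hL _ _).trans_lt ?_)
      have h := mapA_lip s hC hC1 hq1 hk (rot t (Int.fract u.1, Int.fract u.2)) (rot t ((j : ℝ) / X, (l : ℝ) / Y))
      simp only [rot, Prod.fst_add, Prod.snd_add, add_sub_add_right_eq_sub] at h
      have h2 : L * (|Int.fract u.2 - (l:ℝ)/Y| + k * S.q * C * |Int.fract u.1 - (j:ℝ)/X|) < ε := by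
        have a1 : L * |Int.fract u.2 - (l:ℝ)/Y| ≤ ε / 3 := by
          calc L * |Int.fract u.2 - (l:ℝ)/Y| ≤ L * (1 / Y) := by gcongr
            _ ≤ ε / 3 := by
              rw [mul_one_div, div_le_iff₀ hY0]
              rw [div_lt_iff₀ hε] at hY1
              linarith
        have a2 : L * (k * S.q * C * |Int.fract u.1 - (j:ℝ)/X|) ≤ ε / 3 := by
          calc L * (k * S.q * C * |Int.fract u.1 - (j:ℝ)/X|) ≤ L * (k * S.q * C * (1 / X)) := by gcongr
            _ = (L * k * S.q * C) / X := by ring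
            _ ≤ ε / 3 := by
              rw [div_le_iff₀ hX0]
              rw [div_lt_iff₀ hε] at hX1
              linarith
        rw [mul_add]; linarith
      exact (mul_le_mul_of_nonneg_left h (by linarith)).trans_lt h2

end

end

end AbC
end


section
open MeasureTheory Filter Set
open scoped Topology ENNReal NNReal ContDiff

namespace AbC

noncomputable section

lemma half_diff {e : ℝ → ℝ} (he : Continuous e) {B : ℝ} (hB : ∀ t, |e t| ≤ B) (d t0 : ℝ)
    (h0 : 1/2 ≤ e (t0 + d) - e t0) : ∃ t, e (t + d) - e t = 1/2 := by
  have hc : Continuous fun t => e (t + d) - e t := (he.comp (continuous_id.add continuous_const)).sub he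
  have hlow : ∃ t, e (t + d) - e t ≤ 1/2 := by
    by_contra hcon
    push Not at hcon
    have key : ∀ n : ℕ, e 0 + n * (1/2) ≤ e (n * d) := by
      intro n
      induction n with
      | zero => simp
      | succ n ih =>
        have := hcon (n * d)
        have e1 : ((n + 1 : ℕ) : ℝ) * d = n * d + d := by push_cast; ring
        rw [e1]; push_cast; linarith
    obtain ⟨n, hn⟩ := exists_nat_gt (4 * B)
    have h1 := key n
    have h2 := abs_le.1 (hB 0)
    have h3 := abs_le.1 (hB (n * d))
    linarith [h2.1, h3.2]
  obtain ⟨t1, ht1⟩ := hlow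
  obtain ⟨t, ht⟩ := mem_range_of_exists_le_of_exists_ge hc ⟨t1, ht1⟩ ⟨t0, h0⟩
  exact ⟨t, ht⟩

section
variable {η : ℝ} (S : St) (s : Saw η)

lemma lower_count (h0 : 0 < η) (h1 : η ≤ 1/4) : ∃ D : ℕ, 1 ≤ D ∧ ∀ᶠ k : ℕ in atTop, ∀ hk : 1 ≤ k,
    ∃ (M : ℕ) (w : ℕ → E2), k ≤ D * M ∧ ∀ j < M, ∀ j' < M, j ≠ j' → ∃ i ≤ (next S s k hk).q,
      1/3 ≤ dist (torusProj ((next S s k hk).F (i * (next S s k hk).α) (w j)))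
        (torusProj ((next S s k hk).F (i * (next S s k hk).α) (w j'))) := by
  obtain ⟨c, hc⟩ := S.disp
  obtain ⟨L, hL1, hL⟩ := S.lip
  obtain ⟨C, hC1, hC⟩ := saw_lip s
  have hq1 : 1 ≤ S.q := by have := S.hq; omega
  have hq' : (1:ℝ) ≤ S.q := by exact_mod_cast hq1
  refine ⟨2 * (2 * c + 2), by omega, ?_⟩
  filter_upwards [ev_exp (2 * L * S.q * C) 1 (1/12) (by norm_num)] with k hk1 hk
  have hk' : (1:ℝ) ≤ k := by exact_mod_cast hk
  set N := next S s k hk with hN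
  set f := fA s S.q k with hf
  set δ : ℝ := (2 * c + 2) / (k * S.q) with hδ
  set e : ℝ → ℝ := fun t => (S.H (mapA f (t, 0))).2 with he
  have hec : Continuous e := by
    have h1 : Continuous (mapA f) := (mapA_contDiff (fA_cd s S.q k)).continuous
    exact continuous_snd.comp (S.sH.continuous.comp (h1.comp (continuous_id.prodMk continuous_const)))
  have hef : ∀ t, |e t - f t| ≤ c := by
    intro t
    have := hc (mapA f (t, 0))
    simpa [mapA, he] using this
  have heB : ∀ t, |e t| ≤ k + c := by
    intro t
    have h1 := abs_le.1 (hef t)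
    have h2 := fA_nonneg s S.q k t
    have h3 := fA_le s S.q k t
    rw [abs_le]
    constructor <;> linarith
  have heper : ∀ (t : ℝ) (m : ℤ), e (t + m) = e t := by
    intro t m
    have := equiv_HA S s k (t, 0) m 0
    simp only [Function.comp, Prod.mk_add_mk, Int.cast_zero, add_zero] at this
    simp only [he, hf]
    rw [this]
    simp
  have heL : ∀ t t', |e t - e t'| ≤ L * S.q * C * k * |t - t'| := by
    intro t t'
    have h1 := hL (mapA f (t,0)) (mapA f (t',0))
    have h2 := mapA_lip s hC hC1 hq1 hk (t,0) (t',0)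
    simp only [sub_self, abs_zero, zero_add] at h2
    have h3 : |e t - e t'| ≤ dist (S.H (mapA f (t,0))) (S.H (mapA f (t',0))) := by
      rw [Prod.dist_eq]; exact le_max_right _ _
    calc |e t - e t'| ≤ L * (k * S.q * C * |t - t'|) := h3.trans (h1.trans (mul_le_mul_of_nonneg_left h2 (by linarith)))
      _ = _ := by ring
  have hNq : N.q = S.q * 4 ^ k := rfl
  have hNα : N.α = S.α + 1 / (S.q * 4 ^ k) := next_α S s k hk
  have main : ∀ x d : ℝ, (2 * c + 2) / (k * S.q) ≤ d → S.q * d ≤ 1/2 → ∃ i ≤ N.q,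
      1/3 ≤ dist (torusProj (N.F (i * N.α) (S.H (mapA f (x + d, 0))))) (torusProj (N.F (i * N.α) (S.H (mapA f (x, 0))))) := by
    intro x d hd1 hd2
    obtain ⟨t, ht⟩ := half_diff hec heB d (η / S.q) (by
      have h1 := abs_le.1 (hef (η / S.q))
      have h2 := abs_le.1 (hef (η / S.q + d))
      have hqp := S.qpos
      have e1 : f (η / S.q) = k * η := by
        simp only [hf, fA]
        rw [mul_div_cancel₀ _ hqp.ne', s.eq]
        · exact le_rfl
        · linarith
      have hd0 : 0 ≤ d := le_trans (by positivity) hd1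
      have e2 : f (η / S.q + d) = k * (η + S.q * d) := by
        simp only [hf, fA]
        rw [mul_add, mul_div_cancel₀ _ hqp.ne', s.eq]
        · nlinarith
        · linarith
      rw [div_le_iff₀ (by positivity)] at hd1
      rw [e1] at h1; rw [e2] at h2
      nlinarith [h1.1, h1.2, h2.1, h2.2])
    set τ := t - x with hτ
    have hf0 := Int.fract_nonneg τ
    have hf1 := Int.fract_lt_one τ
    have h4 : (0:ℝ) < 4 ^ k := by positivity
    set j := ⌊Int.fract τ * 4 ^ k⌋₊ with hj
    have a1 : (j:ℝ) ≤ Int.fract τ * 4 ^ k := Nat.floor_le (by positivity)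
    have a2 : Int.fract τ * 4 ^ k < j + 1 := Nat.lt_floor_add_one _
    have hj4 : j ≤ 4 ^ k := by
      have : (j:ℝ) ≤ 4 ^ k := by nlinarith
      exact_mod_cast this
    have hclose : |(j:ℝ) / 4 ^ k - Int.fract τ| ≤ 1 / 4 ^ k := by
      rw [abs_sub_comm, abs_of_nonneg]
      · rw [sub_le_iff_le_add, ← add_div, le_div_iff₀ h4]; linarith
      · rw [sub_nonneg, div_le_iff₀ h4]; exact a1
    refine ⟨S.q * j, by rw [hNq]; exact Nat.mul_le_mul_left _ hj4, ?_⟩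
    have hiα : ((S.q * j : ℕ) : ℝ) * N.α = j / 4 ^ k + ((j * S.a : ℤ) : ℝ) := by
      rw [hNα]; unfold St.α
      have := S.qpos
      push_cast; field_simp
      ring
    have hpt : ∀ y, |e (y + ((S.q * j : ℕ) : ℝ) * N.α) - e (y + τ)| ≤ 1/24 := by
      intro y
      have b1 : y + ((S.q * j : ℕ) : ℝ) * N.α = (y + j / 4 ^ k) + ((j * S.a : ℤ) : ℝ) := by rw [hiα]; ring
      have b2 : y + τ = (y + Int.fract τ) + ((⌊τ⌋ : ℤ) : ℝ) := by rw [add_assoc, Int.fract_add_floor]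
      rw [b1, b2, heper, heper]
      refine (heL _ _).trans ?_
      rw [add_sub_add_left_eq_sub]
      calc L * S.q * C * k * |(j:ℝ) / 4 ^ k - Int.fract τ| ≤ L * S.q * C * k * (1 / 2) ^ k := by
            apply mul_le_mul_of_nonneg_left _ (by positivity)
            refine hclose.trans ?_
            rw [four_inv]
            exact mul_le_of_le_one_left (by positivity) (half_pow_le_one k)
        _ ≤ 1/24 := by rw [pow_one] at hk1; linarith
    rw [hN, next_F_pt, next_F_pt]
    refine le_trans ?_ (dist_proj_ge _ _)
    have r : ∀ (y r : ℝ), rot r (y, 0) = (y + r, 0) := by intro y r; simp [rot]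
    rw [r, r]
    have g1 := abs_le.1 (hpt (x + d))
    have g2 := abs_le.1 (hpt x)
    have t1 : x + d + τ = t + d := by rw [hτ]; ring
    have t2 : x + τ = t := by rw [hτ]; ring
    rw [t1] at g1; rw [t2] at g2
    refine le_trans ?_ (norm_near_half _ (1/12) ?_)
    · norm_num
    · change |e _ - e _ - 1/2| ≤ _
      rw [abs_le]
      constructor <;> linarith [g1.1, g1.2, g2.1, g2.2]
  refine ⟨k / (2 * (2 * c + 2)) + 1, fun j => S.H (mapA f (j * δ, 0)), ?_, ?_⟩
  · rw [mul_add, mul_one]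
    have := Nat.div_add_mod k (2 * (2 * c + 2))
    have := Nat.mod_lt k (by omega : 0 < 2 * (2 * c + 2))
    omega
  · have lt_case : ∀ j < k / (2 * (2 * c + 2)) + 1, ∀ j' < j, ∃ i ≤ N.q,
        1/3 ≤ dist (torusProj (N.F (i * N.α) (S.H (mapA f (j * δ, 0))))) (torusProj (N.F (i * N.α) (S.H (mapA f (j' * δ, 0))))) := by
      intro j hj j' hjj
      have hm := main (j' * δ) ((j - j') * δ) ?_ ?_
      · have : (j':ℝ) * δ + (j - j') * δ = j * δ := by ring
        rwa [this] at hm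
      · rw [← hδ]
        have h1 : (j':ℝ) + 1 ≤ j := by exact_mod_cast hjj
        have h2 : 0 ≤ δ := by positivity
        nlinarith
      · have h1 : j * (2 * (2 * c + 2)) ≤ k := (Nat.le_div_iff_mul_le (by omega)).1 (by omega)
        have h1' : (j:ℝ) * (2 * (2 * c + 2)) ≤ k := by exact_mod_cast h1
        have hqp := S.qpos
        rw [hδ]
        have e1 : (S.q:ℝ) * ((j - j') * ((2 * c + 2) / (k * S.q))) = (j - j') * (2 * c + 2) / k := by
          field_simp
        rw [e1, div_le_iff₀ (by linarith)]
        have h3 : (0:ℝ) ≤ j' * (2 * c + 2) := by positivity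
        nlinarith
    intro j hj j' hj' hne
    rcases lt_or_gt_of_ne hne with h | h
    · obtain ⟨i, hi, h2⟩ := lt_case j' hj' j h
      exact ⟨i, hi, by rw [dist_comm]; exact h2⟩
    · have h3 := lt_case j hj j' h
      exact h3

/-- A point is good when both coordinates avoid the bad zones of the sawtooth. -/
def Good (k : ℕ) (p : E2) : Prop := η ≤ ‖(p.2 : Torus1)‖ ∧ η ≤ ‖((S.q * (p.1 - fB s S.q k p.2) : ℝ) : Torus1)‖

lemma ev_good (n : ℕ) : ∀ᶠ k : ℕ in atTop, ∀ hk : 1 ≤ k, ∀ p p' : E2, Good S s k p → Good S s k p' →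
    |p.1 - p'.1| ≤ 4 / (S.q * 4 ^ k) → dist (torusProj ((next S s k hk).H p)) (torusProj ((next S s k hk).H p')) ≤ (1/2) ^ n := by
  obtain ⟨L, hL1, hL⟩ := S.lip
  have hq1 : 1 ≤ S.q := by have := S.hq; omega
  have hq' : (1:ℝ) ≤ S.q := by exact_mod_cast hq1
  have hinv : ∀ᶠ k : ℕ in atTop, L * (1 / (k:ℝ)) ≤ (1/2)^n / 2 := by
    have h := (tendsto_one_div_atTop_nhds_zero_nat (𝕜 := ℝ)).const_mul L
    rw [mul_zero] at h
    filter_upwards [h.eventually (gt_mem_nhds (by positivity : (0:ℝ) < (1/2)^n / 2))] with k hk using hk.le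
  filter_upwards [hinv, ev_exp (8 * L * S.q) 1 ((1/2)^n / 2) (by positivity)] with k h1 h2 hk p p' hp hp' hd
  have hk' : (1:ℝ) ≤ k := by exact_mod_cast hk
  have hqp := S.qpos
  have form : ∀ p : E2, Good S s k p → torusProj ((next S s k hk).H p) =
      torusProj (S.H (p.1 - fB s S.q k p.2, k * S.q * p.1)) := by
    intro p hp
    have a1 := s.good _ hp.1
    have a2 := s.good _ hp.2
    obtain ⟨m1, hm1⟩ := (coe_eq_iff _ _).1 a1
    obtain ⟨m2, hm2⟩ := (coe_eq_iff _ _).1 a2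
    have e : mapA (fA s S.q k) (mapB (fun y => - fB s S.q k y) p) =
        (p.1 - fB s S.q k p.2, k * S.q * p.1) + (((0:ℤ):ℝ), ((-m1 + k * m2 : ℤ) : ℝ)) := by
      ext
      · simp [mapA, mapB]; ring
      · simp only [mapA, mapB, Prod.snd_add, fA]
        rw [← sub_eq_add_neg, hm2]
        have : fB s S.q k p.2 = (p.2 + m1) / (k * S.q) := by
          simp only [fB, one_mul]; rw [hm1]; ring
        rw [this]; push_cast; field_simp; ring
    change torusProj (S.H (mapA (fA s S.q k) (mapB (fun y => - fB s S.q k y) p))) = _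
    rw [e, S.eH, torusProj_add_int]
  rw [form p hp, form p' hp']
  refine (dist_proj_le _ _).trans ((hL _ _).trans ?_)
  have d1 : |p.1 - p'.1| ≤ 4 * (1/2)^k := by
    refine hd.trans ?_
    have := (dα_le S k).2
    have h3 : ((1/2 : ℝ)^k * (1/2)^k) ≤ (1/2)^k := mul_le_of_le_one_left (by positivity) (half_pow_le_one k)
    calc (4:ℝ) / (S.q * 4 ^ k) = 4 * (1 / (S.q * 4 ^ k)) := by ring
      _ ≤ _ := by linarith
  have d2 : dist ((p.1 - fB s S.q k p.2, k * S.q * p.1) : E2) (p'.1 - fB s S.q k p'.2, k * S.q * p'.1) ≤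
      1 / k + 8 * S.q * k * (1/2)^k := by
    rw [Prod.dist_eq]
    have kq : 1 ≤ (k:ℝ) * S.q := one_le_mul_of_one_le_of_one_le hk' hq'
    have hh : (0:ℝ) < (1/2)^k := by positivity
    apply max_le
    · rw [Real.dist_eq]
      have b1 := fB_nonneg s S.q k p.2
      have b2 := fB_le s S.q k p.2
      have b3 := fB_nonneg s S.q k p'.2
      have b4 := fB_le s S.q k p'.2
      have b5 : 1 / ((k:ℝ) * S.q) ≤ 1 / k := one_div_le_one_div_of_le (by linarith) (by nlinarith)
      have b6 := abs_le.1 d1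
      rw [abs_le]
      constructor <;> nlinarith [b6.1, b6.2]
    · rw [Real.dist_eq, ← mul_sub, abs_mul, abs_of_nonneg (by positivity)]
      have : (0:ℝ) ≤ 1 / k := by positivity
      nlinarith
  calc L * _ ≤ L * (1 / k + 8 * S.q * k * (1/2)^k) := mul_le_mul_of_nonneg_left d2 (by linarith)
    _ = L * (1 / k) + 8 * L * S.q * k ^ 1 * (1/2) ^ k := by ring
    _ ≤ _ := by linarith

end

end

end AbC
end


section
open MeasureTheory Filter Set
open scoped Topology ENNReal NNReal ContDiff

namespace AbC

noncomputable section

/-- sawtooth error parameters -/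
def eta (n : ℕ) : ℝ := (1/2) ^ (n + 3)

lemma eta_pos (n : ℕ) : 0 < eta n := by unfold eta; positivity
lemma eta_le (n : ℕ) : eta n ≤ 1/4 := by
  unfold eta
  have := half_pow_le_one n
  rw [pow_add]; norm_num; linarith

/-- All quantitative requirements for one step of the construction. -/
structure Step (n : ℕ) (S : St) (s : Saw (eta n)) (k : ℕ) (hk : 1 ≤ k) : Prop where
  smooth : ∀ m : ℤ, |m| ≤ 1 → ∀ i ≤ n, ∀ x,
    ‖iteratedFDeriv ℝ i (fun p => (next S s k hk).F (m * (next S s k hk).α) p - S.F (m * S.α) p) x‖ ≤ (1/2) ^ n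
  time : ∀ i : ℕ, i ≤ 2 ^ k → ∀ p,
    dist ((next S s k hk).F (i * (next S s k hk).α) p) (S.F (i * S.α) p) ≤ (1/2) ^ n
  upper : ∃ D : ℕ, 1 ≤ D ∧ D ^ n ≤ k ∧ ∀ ε : ℝ, 0 < ε → ε ≤ 1 →
    ∃ Fs : Finset E2, (Fs.card : ℝ) ≤ D * k / ε ^ 2 ∧
      ∀ p, ∃ w ∈ Fs, ∀ t, dist (torusProj ((next S s k hk).F t p)) (torusProj ((next S s k hk).F t w)) < ε
  lower : ∃ D : ℕ, 1 ≤ D ∧ D ^ n ≤ k ∧ ∃ (M : ℕ) (w : ℕ → E2), k ≤ D * M ∧ ∀ j < M, ∀ j' < M, j ≠ j' →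
    ∃ i ≤ (next S s k hk).q,
      1/3 ≤ dist (torusProj ((next S s k hk).F (i * (next S s k hk).α) (w j)))
        (torusProj ((next S s k hk).F (i * (next S s k hk).α) (w j')))
  good : ∀ p p' : E2, Good S s k p → Good S s k p' →
    |p.1 - p'.1| ≤ 4 / (S.q * 4 ^ k) → dist (torusProj ((next S s k hk).H p)) (torusProj ((next S s k hk).H p')) ≤ (1/2) ^ n
  qle : S.q ≤ 2 ^ k

lemma step_exists (n : ℕ) (S : St) : ∃ (s : Saw (eta n)) (k : ℕ) (hk : 1 ≤ k), Step n S s k hk := by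
  obtain ⟨s⟩ := exists_saw (eta n) (eta_pos n) (eta_le n)
  obtain ⟨D1, hD1, hu⟩ := upper_count S s
  obtain ⟨D2, hD2, hl⟩ := lower_count S s (eta_pos n) (eta_le n)
  have hq : ∀ᶠ k : ℕ in atTop, S.q ≤ 2 ^ k := (tendsto_pow_atTop_atTop_of_one_lt (by norm_num : 1 < 2)).eventually_ge_atTop S.q
  obtain ⟨k, k1, h1, h2, h3, h4, h5, h6, h7⟩ := ((eventually_ge_atTop 1).and ((ev_smooth S s n).and ((ev_time S s n).and
    (hl.and ((ev_good S s n).and (hq.and ((eventually_ge_atTop (D1 ^ n)).and (eventually_ge_atTop (D2 ^ n))))))))).exists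
  exact ⟨s, k, k1, h1 k1, h2 k1, ⟨D1, hD1, h6, hu k k1⟩, ⟨D2, hD2, h7, h3 k1⟩, h4 k1, h5⟩

/-- chosen sawtooth -/
def sw (n : ℕ) (S : St) : Saw (eta n) := (step_exists n S).choose
/-- chosen parameter -/
def kk (n : ℕ) (S : St) : ℕ := (step_exists n S).choose_spec.choose
lemma kk_pos (n : ℕ) (S : St) : 1 ≤ kk n S := (step_exists n S).choose_spec.choose_spec.choose
lemma kk_step (n : ℕ) (S : St) : Step n S (sw n S) (kk n S) (kk_pos n S) :=
  (step_exists n S).choose_spec.choose_spec.choose_spec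

/-- initial stage -/
def S0 : St where
  H := fun p => p
  G := fun p => p
  q := 2
  a := 0
  hq := le_rfl
  HG := fun _ => rfl
  GH := fun _ => rfl
  sH := contDiff_id
  sG := contDiff_id
  bH := (PB.clm (ContinuousLinearMap.id ℝ E2)).bdd (k := 1) le_rfl
  bG := (PB.clm (ContinuousLinearMap.id ℝ E2)).bdd (k := 1) le_rfl
  eH := Equiv2.id
  eG := Equiv2.id
  disp := ⟨0, fun p => by simp⟩
  mH := by rw [desc_id]; exact MeasurePreserving.id _
  mG := by rw [desc_id]; exact MeasurePreserving.id _

/-- the sequence of stages -/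
def sq : ℕ → St
  | 0 => S0
  | n + 1 => next (sq n) (sw n (sq n)) (kk n (sq n)) (kk_pos n (sq n))

/-- parameters along the sequence -/
def K (n : ℕ) : ℕ := kk n (sq n)
/-- sawtooths along the sequence -/
def sn (n : ℕ) : Saw (eta n) := sw n (sq n)
lemma K_pos (n : ℕ) : 1 ≤ K n := kk_pos n (sq n)
lemma sq_succ (n : ℕ) : sq (n + 1) = next (sq n) (sn n) (K n) (K_pos n) := rfl
lemma sq_step (n : ℕ) : Step n (sq n) (sn n) (K n) (K_pos n) := kk_step n (sq n)

lemma q_succ (n : ℕ) : (sq (n+1)).q = (sq n).q * 4 ^ K n := rfl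
lemma α_succ (n : ℕ) : (sq (n+1)).α = (sq n).α + 1 / (sq (n+1)).q := by
  rw [q_succ, sq_succ, next_α]; push_cast; rfl

lemma K_succ (n : ℕ) : 2 * K n + 1 ≤ K (n + 1) := by
  have h := (sq_step (n+1)).qle
  rw [q_succ] at h
  have h2 := (sq n).hq
  have h3 : 2 ^ (2 * K n + 1) ≤ 2 ^ K (n+1) := by
    calc 2 ^ (2 * K n + 1) = 2 * 4 ^ K n := by rw [pow_succ, pow_mul]; norm_num; ring
      _ ≤ (sq n).q * 4 ^ K n := Nat.mul_le_mul_right _ h2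
      _ ≤ _ := h
  exact (Nat.pow_le_pow_iff_right (by norm_num)).1 h3

lemma K_strictMono : StrictMono K := strictMono_nat_of_lt_succ fun n => by have := K_succ n; omega
lemma le_K (n : ℕ) : n ≤ K n := K_strictMono.le_apply

/-- approximants -/
def Fn (m : ℤ) (n : ℕ) : E2 → E2 := (sq n).F (m * (sq n).α)

lemma Fn_cd (m : ℤ) (n : ℕ) : ContDiff ℝ ∞ (Fn m n) := (sq n).F_cd _

/-- increments -/
def dF (m : ℤ) (n : ℕ) : E2 → E2 := fun p => Fn m (n + 1) p - Fn m n p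

lemma dF_cd (m : ℤ) (n : ℕ) : ContDiff ℝ ∞ (dF m n) := (Fn_cd m (n+1)).sub (Fn_cd m n)

lemma dF_bound (m : ℤ) (hm : |m| ≤ 1) (n i : ℕ) (hi : i ≤ n) (x : E2) : ‖iteratedFDeriv ℝ i (dF m n) x‖ ≤ (1/2) ^ n :=
  (sq_step n).smooth m hm i hi x

lemma dF_bound0 (m : ℤ) (hm : |m| ≤ 1) (n : ℕ) (x : E2) : ‖dF m n x‖ ≤ (1/2) ^ n := by
  have := dF_bound m hm n 0 (Nat.zero_le _) x
  rwa [norm_iteratedFDeriv_zero] at this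

/-- the limit -/
def FL (m : ℤ) : E2 → E2 := fun p => Fn m 0 p + ∑' n, dF m n p

lemma sum_half : Summable fun n : ℕ => (1/2 : ℝ) ^ n := summable_geometric_two

lemma FL_cd (m : ℤ) (hm : |m| ≤ 1) : ContDiff ℝ ∞ (FL m) := by
  refine (Fn_cd m 0).add ?_
  refine contDiff_tsum_of_eventually (v := fun _ n => (1/2 : ℝ) ^ n) (dF_cd m) (fun _ _ => sum_half) ?_
  intro i _
  rw [Nat.cofinite_eq_atTop]
  filter_upwards [eventually_ge_atTop i] with n hn x
  exact dF_bound m hm n i hn x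

lemma Fn_tendsto (m : ℤ) (hm : |m| ≤ 1) (p : E2) : Tendsto (fun n => Fn m n p) atTop (𝓝 (FL m p)) := by
  have hs : Summable fun n => dF m n p := Summable.of_norm_bounded sum_half (fun n => dF_bound0 m hm n p)
  have h := hs.hasSum.tendsto_sum_nat.const_add (Fn m 0 p)
  refine h.congr fun n => ?_
  induction n with
  | zero => simp
  | succ n ih => rw [Finset.sum_range_succ, ← add_assoc, ih]; simp [dF]

lemma Fn_dist (m : ℤ) (hm : |m| ≤ 1) (n : ℕ) (p : E2) : dist (Fn m n p) (FL m p) ≤ 2 * (1/2) ^ n := by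
  have := dist_le_of_le_geometric_of_tendsto (1/2 : ℝ) 1 (by norm_num) (f := fun n => Fn m n p) (fun n => by
    rw [dist_comm, dist_eq_norm, one_mul]; exact dF_bound0 m hm n p) (Fn_tendsto m hm p) n
  refine this.trans (le_of_eq ?_)
  ring

lemma half_tendsto : Tendsto (fun n : ℕ => 2 * (1/2 : ℝ) ^ n) atTop (𝓝 0) := by
  have := (tendsto_pow_atTop_nhds_zero_of_lt_one (by norm_num : (0:ℝ) ≤ 1/2) (by norm_num)).const_mul 2
  simpa using this

lemma Fn_tendsto_comp (m : ℤ) (hm : |m| ≤ 1) {p : ℕ → E2} {p0 : E2} (hp : Tendsto p atTop (𝓝 p0)) :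
    Tendsto (fun n => Fn m n (p n)) atTop (𝓝 (FL m p0)) := by
  have h1 : Tendsto (fun n => FL m (p n)) atTop (𝓝 (FL m p0)) := ((FL_cd m hm).continuous.tendsto _).comp hp
  refine h1.congr_dist ?_
  refine squeeze_zero (fun _ => dist_nonneg) (fun n => ?_) half_tendsto
  rw [dist_comm]
  exact Fn_dist m hm n (p n)

lemma FL_equiv (m : ℤ) (hm : |m| ≤ 1) : Equiv2 (FL m) := by
  intro p a b
  refine tendsto_nhds_unique (Fn_tendsto m hm _) ?_
  refine ((Fn_tendsto m hm p).add_const _).congr fun n => ?_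
  exact ((sq n).F_equiv _ p a b).symm

lemma FL_inv (m m' : ℤ) (hm : |m| ≤ 1) (hm' : |m'| ≤ 1) (h : m + m' = 0) (p : E2) : FL m (FL m' p) = p := by
  refine tendsto_nhds_unique (Fn_tendsto_comp m hm (Fn_tendsto m' hm' p)) ?_
  refine tendsto_const_nhds.congr fun n => ?_
  unfold Fn
  rw [St.F_add, ← add_mul, ← Int.cast_add, h, Int.cast_zero, zero_mul, St.F_zero]

/-- the limit lift and its inverse -/
def F : E2 → E2 := FL 1
/-- the diffeomorphism -/
def T : Torus2 → Torus2 := desc F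
/-- its inverse -/
def Ti : Torus2 → Torus2 := desc (FL (-1))

lemma F_equiv : Equiv2 F := FL_equiv 1 (by simp)
lemma F_cont : Continuous F := (FL_cd 1 (by simp)).continuous
lemma T_proj (p : E2) : T (torusProj p) = torusProj (F p) := desc_proj F_equiv p
lemma T_cont : Continuous T := desc_continuous F_equiv F_cont

lemma T_Ti (z : Torus2) : T (Ti z) = z := by
  obtain ⟨p, rfl⟩ := torusProj_surj z
  unfold T Ti
  rw [desc_proj (FL_equiv (-1) (by simp)), desc_proj F_equiv]
  unfold F
  rw [FL_inv 1 (-1) (by simp) (by simp) (by simp)]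

lemma Ti_T (z : Torus2) : Ti (T z) = z := by
  obtain ⟨p, rfl⟩ := torusProj_surj z
  unfold T Ti
  rw [desc_proj F_equiv, desc_proj (FL_equiv (-1) (by simp))]
  unfold F
  rw [FL_inv (-1) 1 (by simp) (by simp) (by simp)]

lemma T_bij : Function.Bijective T := ⟨fun a b h => by rw [← Ti_T a, h, Ti_T], fun z => ⟨Ti z, T_Ti z⟩⟩

lemma T_diffeo : IsCkTorusDiffeo ⊤ T := by
  refine ⟨T_bij, ⟨F, FL_cd 1 (by simp), isLiftOf_desc F_equiv⟩, ⟨FL (-1), FL_cd (-1) (by simp), ?_⟩⟩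
  have : Function.invFun T = Ti := by
    funext z
    apply T_bij.1
    rw [T_Ti]
    exact Function.invFun_eq (T_bij.2 z)
  rw [this]
  exact isLiftOf_desc (FL_equiv (-1) (by simp))

lemma T_mp : MeasurePreserving T (volume : Measure Torus2) volume := by
  refine measurePreserving_of_tendsto (f := fun n => desc (Fn 1 n)) (fun n => (sq n).mF _) T_cont.measurable ?_
  intro z
  obtain ⟨p, rfl⟩ := torusProj_surj z
  rw [T_proj]
  have := (continuous_proj.tendsto (F p)).comp (Fn_tendsto 1 (by simp) p)
  refine this.congr fun n => ?_
  exact (desc_proj ((sq n).F_equiv _) p).symm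

lemma iter_tendsto (i : ℕ) (p : E2) : Tendsto (fun n => (sq n).F (i * (sq n).α) p) atTop (𝓝 (F^[i] p)) := by
  have h : Tendsto (fun n => (Fn 1 n)^[i] p) atTop (𝓝 (F^[i] p)) := by
    induction i with
    | zero => simp
    | succ i ih =>
      simp only [Function.iterate_succ_apply']
      exact Fn_tendsto_comp 1 (by simp) ih
  refine h.congr fun n => ?_
  unfold Fn
  rw [St.F_iter]
  simp

lemma iter_dist (n i : ℕ) (hi : i ≤ 2 ^ K n) (p : E2) : dist ((sq n).F (i * (sq n).α) p) (F^[i] p) ≤ 2 * (1/2) ^ n := by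
  have ht : Tendsto (fun j => (sq (n + j)).F (i * (sq (n + j)).α) p) atTop (𝓝 (F^[i] p)) := by
    have := (tendsto_add_atTop_iff_nat n).2 (iter_tendsto i p)
    simpa [add_comm] using this
  have := dist_le_of_le_geometric_of_tendsto (1/2 : ℝ) ((1/2) ^ n) (by norm_num)
    (f := fun j => (sq (n + j)).F (i * (sq (n + j)).α) p) (fun j => by
    rw [dist_comm, ← pow_add]
    refine (sq_step (n + j)).time i (hi.trans ?_) p
    exact Nat.pow_le_pow_right (by norm_num) (K_strictMono.monotone (by omega))) ht 0
  refine this.trans (le_of_eq ?_)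
  ring

lemma T_iter (i : ℕ) (p : E2) : T^[i] (torusProj p) = torusProj (F^[i] p) := by
  induction i with
  | zero => rfl
  | succ i ih => rw [Function.iterate_succ_apply', Function.iterate_succ_apply', ih, T_proj]

end

end AbC
end


section
open MeasureTheory Filter Set
open scoped Topology ENNReal NNReal ContDiff

namespace AbC

noncomputable section

lemma bowenDist_lt_iff {ε : ℝ} (hε : 0 < ε) (m : ℕ) (x y : Torus2) :
    bowenDist T m x y < ε ↔ ∀ i < m, dist (T^[i] x) (T^[i] y) < ε := by
  unfold bowenDist
  lift ε to ℝ≥0 using hε.le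
  rw [NNReal.coe_lt_coe, Finset.sup_lt_iff (by exact_mod_cast hε)]
  simp only [Finset.mem_range, dist_nndist, NNReal.coe_lt_coe]

lemma T_iter_dist (n i : ℕ) (hi : i ≤ 2 ^ K n) (p : E2) :
    dist (T^[i] (torusProj p)) (torusProj ((sq n).F (i * (sq n).α) p)) ≤ 2 * (1/2) ^ n := by
  rw [T_iter, dist_comm]
  exact (dist_proj_le _ _).trans (iter_dist n i hi p)

lemma upper_set (n m : ℕ) (ε : ℝ) (hε : 0 < ε) (hε1 : ε ≤ 1) (hn : 4 * (1/2 : ℝ) ^ n ≤ ε) (hm : m ≤ 2 ^ K (n+1) + 1) :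
    ∃ D : ℕ, 1 ≤ D ∧ D ^ n ≤ K n ∧ ∃ Fs : Finset Torus2, (Fs.card : ℝ) ≤ D * K n / (ε / 2) ^ 2 ∧
      ∀ y, ∃ x ∈ Fs, bowenDist T m x y < ε := by
  classical
  obtain ⟨D, hD, hDn, h⟩ := (sq_step n).upper
  obtain ⟨Fs, hF, hc⟩ := h (ε / 2) (by linarith) (by linarith)
  refine ⟨D, hD, hDn, Fs.image torusProj, ?_, ?_⟩
  · refine le_trans ?_ hF
    exact_mod_cast Finset.card_image_le
  · intro y
    obtain ⟨p, rfl⟩ := torusProj_surj y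
    obtain ⟨w, hw, hd⟩ := hc p
    refine ⟨torusProj w, Finset.mem_image_of_mem _ hw, ?_⟩
    rw [bowenDist_lt_iff hε]
    intro i hi
    have h1 := T_iter_dist (n+1) i (by omega) p
    have h2 := T_iter_dist (n+1) i (by omega) w
    have h3 := hd (i * (sq (n+1)).α)
    rw [← sq_succ] at h3
    have h4 := dist_triangle4 (T^[i] (torusProj w)) (torusProj ((sq (n+1)).F (i * (sq (n+1)).α) w))
      (torusProj ((sq (n+1)).F (i * (sq (n+1)).α) p)) (T^[i] (torusProj p))
    rw [dist_comm] at h1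
    rw [dist_comm] at h3
    rw [pow_succ] at h1 h2
    linarith

lemma cover_upper (n m : ℕ) (ε : ℝ) (hε : 0 < ε) (hε1 : ε ≤ 1) (hn : 4 * (1/2 : ℝ) ^ n ≤ ε) (hm : m ≤ 2 ^ K (n+1) + 1) :
    ∃ D : ℕ, 1 ≤ D ∧ D ^ n ≤ K n ∧ (bowenCoverNum T m ε : ℝ) ≤ D * K n / (ε / 2) ^ 2 := by
  obtain ⟨D, hD, hDn, Fs, hF, hc⟩ := upper_set n m ε hε hε1 hn hm
  refine ⟨D, hD, hDn, le_trans ?_ hF⟩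
  have : bowenCoverNum T m ε ≤ Fs.card := Nat.sInf_le ⟨Fs, rfl, hc⟩
  exact_mod_cast this

lemma cover_lower (n : ℕ) (ε : ℝ) (hε : 0 < ε) (hε1 : ε ≤ 1/24) (hn : 4 * (1/2 : ℝ) ^ n ≤ ε) :
    ∃ D : ℕ, 1 ≤ D ∧ D ^ n ≤ K n ∧ K n ≤ D * bowenCoverNum T ((sq (n+1)).q + 1) ε := by
  have hq := (sq_step (n+1)).qle
  have hmem : bowenCoverNum T ((sq (n+1)).q + 1) ε ∈
      {N : ℕ | ∃ F : Finset Torus2, F.card = N ∧ ∀ y : Torus2, ∃ x ∈ F, bowenDist T ((sq (n+1)).q + 1) x y < ε} := by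
    apply Nat.sInf_mem
    obtain ⟨D, hD, hDn, Fs, hF, hc⟩ := upper_set n ((sq (n+1)).q + 1) ε hε (by linarith) hn (by omega)
    exact ⟨_, Fs, rfl, hc⟩
  obtain ⟨Fs, hcard, hc⟩ := hmem
  obtain ⟨D, hD, hDn, M, w, hM, hsep⟩ := (sq_step n).lower
  refine ⟨D, hD, hDn, hM.trans (Nat.mul_le_mul_left _ ?_)⟩
  rw [← hcard]
  choose g hg hgd using fun j : ℕ => hc (torusProj (w j))
  rw [← Finset.card_range M]
  refine Finset.card_le_card_of_injOn g (fun j _ => hg j) ?_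
  intro j hj j' hj' hgj
  by_contra hne
  rw [Finset.coe_range, Set.mem_Iio] at hj hj'
  obtain ⟨i, hi, hd⟩ := hsep j hj j' hj' hne
  rw [← sq_succ] at hi hd
  have a1 := (bowenDist_lt_iff hε _ _ _).1 (hgd j) i (by omega)
  have a2 := (bowenDist_lt_iff hε _ _ _).1 (hgd j') i (by omega)
  rw [← hgj] at a2
  have h1 := T_iter_dist (n+1) i (by omega) (w j)
  have h2 := T_iter_dist (n+1) i (by omega) (w j')
  have h4 := dist_triangle4 (torusProj ((sq (n+1)).F (i * (sq (n+1)).α) (w j))) (T^[i] (torusProj (w j)))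
      (T^[i] (torusProj (w j'))) (torusProj ((sq (n+1)).F (i * (sq (n+1)).α) (w j')))
  have h5 := dist_triangle (T^[i] (torusProj (w j))) (T^[i] (g j)) (T^[i] (torusProj (w j')))
  rw [dist_comm] at h1 a1
  rw [pow_succ] at h1 h2
  linarith

lemma D_le {n D : ℕ} (hD : D ^ n ≤ K n) {s : ℝ} (hs : 1 ≤ n * s) : (D : ℝ) ≤ (K n : ℝ) ^ s := by
  have hn : n ≠ 0 := by rintro rfl; norm_num at hs
  have hn' : (0:ℝ) < n := by positivity
  have hD' : (D:ℝ) ^ n ≤ K n := by exact_mod_cast hD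
  have hK : (1:ℝ) ≤ K n := by exact_mod_cast K_pos n
  calc (D:ℝ) = ((D:ℝ) ^ n) ^ ((n:ℝ)⁻¹) := (Real.pow_rpow_inv_natCast (by positivity) hn).symm
    _ ≤ (K n : ℝ) ^ ((n:ℝ)⁻¹) := Real.rpow_le_rpow (by positivity) hD' (by positivity)
    _ ≤ (K n : ℝ) ^ s := by
      apply Real.rpow_le_rpow_of_exponent_le hK
      rw [inv_eq_one_div, div_le_iff₀ hn']; linarith

lemma K_tendsto : Tendsto (fun n => (K n : ℝ)) atTop atTop :=
  tendsto_natCast_atTop_atTop.comp K_strictMono.tendsto_atTop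

lemma ratio_eq (N m : ℕ) (hm : 2 ≤ m) (t : ℝ) :
    (N : ℝ≥0∞) / ENNReal.ofReal (logScale m t) = ENNReal.ofReal (N / logScale m t) := by
  have : 0 < logScale m t := Real.rpow_pos_of_pos (Real.log_pos (by exact_mod_cast hm)) t
  rw [ENNReal.ofReal_div_of_pos this, ENNReal.ofReal_natCast]

lemma ev_n (ε : ℝ) (hε : 0 < ε) : ∀ᶠ n : ℕ in atTop, 4 * (1/2 : ℝ) ^ n ≤ ε := by
  filter_upwards [half_tendsto.eventually (gt_mem_nhds (by positivity : (0:ℝ) < ε / 2))] with n hn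
  linarith

lemma ev_s (s : ℝ) (hs : 0 < s) : ∀ᶠ n : ℕ in atTop, 1 ≤ (n : ℝ) * s :=
  (tendsto_natCast_atTop_atTop.atTop_mul_const hs).eventually_ge_atTop 1

lemma limsup_zero (ε : ℝ) (hε : 0 < ε) (hε1 : ε ≤ 1) (t : ℝ) (ht : 1 < t) :
    Filter.atTop.limsup (fun n => (bowenCoverNum T n ε : ℝ≥0∞) / ENNReal.ofReal (logScale n t)) = 0 := by
  apply Tendsto.limsup_eq
  have hreal : Tendsto (fun m => (bowenCoverNum T m ε : ℝ) / logScale m t) atTop (𝓝 0) := by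
    rw [Metric.tendsto_atTop]
    intro δ hδ
    set s := (t - 1) / 2 with hs
    have hs0 : 0 < s := by rw [hs]; linarith
    set C : ℝ := 2 ^ t / (ε / 2) ^ 2 with hC
    have hC0 : 0 < C := by rw [hC]; positivity
    have hdec : ∀ᶠ n : ℕ in atTop, C * (K n : ℝ) ^ (-s) < δ := by
      have := ((tendsto_rpow_neg_atTop hs0).comp K_tendsto).const_mul C
      rw [mul_zero] at this
      exact this.eventually (gt_mem_nhds hδ)
    obtain ⟨n1, hn1⟩ := eventually_atTop.1 (hdec.and ((ev_n ε hε).and (ev_s s hs0)))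
    refine ⟨2 ^ K n1 + 1, fun m hm => ?_⟩
    have hex : ∃ n, m ≤ 2 ^ K n := ⟨m, (Nat.lt_two_pow_self).le.trans (Nat.pow_le_pow_right (by norm_num) (le_K m))⟩
    obtain ⟨n, hn, h1, h2⟩ : ∃ n, n1 ≤ n ∧ 2 ^ K n < m ∧ m ≤ 2 ^ K (n+1) := by
      classical
      have hf := Nat.find_spec hex
      have hgt : n1 < Nat.find hex := by
        by_contra hcon
        push Not at hcon
        have := Nat.pow_le_pow_right (n := 2) (by norm_num) (K_strictMono.monotone hcon)
        omega
      obtain ⟨n, hn⟩ : ∃ n, Nat.find hex = n + 1 := ⟨Nat.find hex - 1, by omega⟩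
      refine ⟨n, by omega, ?_, by rw [← hn]; exact hf⟩
      have := Nat.find_min hex (m := n) (by omega)
      omega
    obtain ⟨hd, hnε, hns⟩ := hn1 n hn
    obtain ⟨D, hD, hDn, hN⟩ := cover_upper n m ε hε hε1 hnε (by omega)
    have hK : (1:ℝ) ≤ K n := by exact_mod_cast K_pos n
    have hDs := D_le hDn hns
    have hlog : (K n : ℝ) / 2 ≤ Real.log m := by
      have a1 : Real.log ((2:ℝ) ^ K n) ≤ Real.log m := Real.log_le_log (by positivity) (by exact_mod_cast h1.le)
      rw [Real.log_pow] at a1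
      have := Real.log_two_gt_d9
      nlinarith
    have hscale : ((K n : ℝ) / 2) ^ t ≤ logScale m t := Real.rpow_le_rpow (by positivity) hlog (by linarith)
    have hpos : 0 < ((K n : ℝ) / 2) ^ t := Real.rpow_pos_of_pos (by positivity) t
    rw [Real.dist_eq, sub_zero, abs_of_nonneg (div_nonneg (Nat.cast_nonneg _) (hpos.le.trans hscale))]
    refine lt_of_le_of_lt ?_ hd
    calc (bowenCoverNum T m ε : ℝ) / logScale m t ≤ ((K n : ℝ) ^ s * K n / (ε / 2) ^ 2) / ((K n : ℝ) / 2) ^ t := by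
          apply div_le_div₀ (by positivity) _ hpos hscale
          refine hN.trans ?_
          gcongr
      _ = C * (K n : ℝ) ^ (-s) := by
        have hK0 : (0:ℝ) < K n := by linarith
        have e1 : (K n : ℝ) ^ t = (K n : ℝ) ^ s * (K n : ℝ) ^ s * K n := by
          rw [← Real.rpow_add hK0]
          nth_rewrite 3 [← Real.rpow_one (K n : ℝ)]
          rw [← Real.rpow_add hK0]
          congr 1; rw [hs]; ring
        have p1 : (0:ℝ) < (K n : ℝ) ^ s := Real.rpow_pos_of_pos hK0 s
        rw [Real.div_rpow hK0.le (by norm_num), e1, Real.rpow_neg hK0.le, hC]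
        field_simp
  have h2 := ENNReal.tendsto_ofReal hreal
  rw [ENNReal.ofReal_zero] at h2
  refine h2.congr' ?_
  filter_upwards [eventually_ge_atTop 2] with m hm
  rw [ratio_eq _ _ hm]

lemma limsup_pos (ε : ℝ) (hε : 0 < ε) (hε1 : ε ≤ 1/24) (t : ℝ) (ht : 0 < t) (ht1 : t < 1) :
    0 < Filter.atTop.limsup (fun n => (bowenCoverNum T n ε : ℝ≥0∞) / ENNReal.ofReal (logScale n t)) := by
  refine lt_of_lt_of_le (zero_lt_one) (le_limsup_of_frequently_le ?_)
  set s := (1 - t) / 2 with hs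
  have hs0 : 0 < s := by rw [hs]; linarith
  have hinc : ∀ᶠ n : ℕ in atTop, 3 ^ t ≤ (K n : ℝ) ^ s :=
    ((tendsto_rpow_atTop hs0).comp K_tendsto).eventually_ge_atTop _
  obtain ⟨n1, hn1⟩ := eventually_atTop.1 (hinc.and ((ev_n ε hε).and (ev_s s hs0)))
  rw [frequently_atTop]
  intro m0
  obtain ⟨h3, hnε, hns⟩ := hn1 (max n1 m0) (le_max_left _ _)
  have hm0 : m0 ≤ max n1 m0 := le_max_right _ _
  set n := max n1 m0 with hn
  obtain ⟨D, hD, hDn, hN⟩ := cover_lower n ε hε hε1 hnε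
  have hDs := D_le hDn hns
  have hK : (1:ℝ) ≤ K n := by exact_mod_cast K_pos n
  have hK0 : (0:ℝ) < K n := by linarith
  have hqge : m0 ≤ (sq (n+1)).q := by
    rw [q_succ]
    have a1 : n ≤ K n := le_K n
    have a2 : K n < 4 ^ K n := Nat.lt_pow_self (by norm_num)
    have a3 : 1 * 4 ^ K n ≤ (sq n).q * 4 ^ K n := Nat.mul_le_mul_right _ (by have := (sq n).hq; omega)
    omega
  refine ⟨(sq (n+1)).q + 1, by omega, ?_⟩
  rw [ratio_eq _ _ (by have := (sq (n+1)).hq; omega), ENNReal.one_le_ofReal]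
  have hlog : Real.log (((sq (n+1)).q + 1 : ℕ) : ℝ) ≤ 3 * K n := by
    have hq := (sq_step n).qle
    have b1 : (sq (n+1)).q + 1 ≤ 16 ^ K n := by
      rw [q_succ]
      calc (sq n).q * 4 ^ K n + 1 ≤ 2 ^ K n * 4 ^ K n + 1 := by gcongr
        _ = 8 ^ K n + 1 := by rw [← mul_pow]; norm_num
        _ ≤ 16 ^ K n := Nat.pow_lt_pow_left (by norm_num) (by have := K_pos n; omega)
    have b2 : ((((sq (n+1)).q + 1 : ℕ)) : ℝ) ≤ 16 ^ K n := by exact_mod_cast b1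
    have b3 := Real.log_le_log (by positivity) b2
    rw [Real.log_pow] at b3
    refine b3.trans ?_
    have b4 : Real.log 16 ≤ 3 := by
      have : (16:ℝ) = 2 ^ 4 := by norm_num
      rw [this, Real.log_pow]
      have := Real.log_two_lt_d9
      push_cast; linarith
    nlinarith
  have hl0 : 0 < Real.log (((sq (n+1)).q + 1 : ℕ) : ℝ) := Real.log_pos (by
    have := (sq (n+1)).hq
    exact_mod_cast (by omega : 1 < (sq (n+1)).q + 1))
  have hscale : logScale ((sq (n+1)).q + 1) t ≤ (3 * K n) ^ t := Real.rpow_le_rpow hl0.le hlog ht.le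
  have hsp : 0 < logScale ((sq (n+1)).q + 1) t := Real.rpow_pos_of_pos hl0 t
  rw [one_le_div hsp]
  refine hscale.trans ?_
  rw [Real.mul_rpow (by norm_num) hK0.le]
  have hN' : (K n : ℝ) ≤ D * bowenCoverNum T ((sq (n+1)).q + 1) ε := by exact_mod_cast hN
  have p1 : (0:ℝ) < (K n : ℝ) ^ s := Real.rpow_pos_of_pos hK0 s
  have e1 : (K n : ℝ) = (K n : ℝ) ^ s * ((K n : ℝ) ^ s * (K n : ℝ) ^ t) := by
    rw [← Real.rpow_add hK0, ← Real.rpow_add hK0]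
    have : s + (s + t) = 1 := by rw [hs]; ring
    rw [this, Real.rpow_one]
  have h5 : (K n : ℝ) ^ s * ((K n : ℝ) ^ s * (K n : ℝ) ^ t) ≤ (K n : ℝ) ^ s * bowenCoverNum T ((sq (n+1)).q + 1) ε := by
    rw [← e1]
    exact hN'.trans (mul_le_mul_of_nonneg_right hDs (by positivity))
  have h6 := le_of_mul_le_mul_left h5 p1
  refine le_trans ?_ h6
  exact mul_le_mul_of_nonneg_right h3 (by positivity)

lemma entFun_eq (ε : ℝ) (hε : 0 < ε) (hε1 : ε ≤ 1/24) : topSlowEntFun T logScale ε = 1 := by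
  unfold topSlowEntFun
  apply csSup_eq_of_forall_le_of_forall_lt_exists_gt
  · exact ⟨1/2, by norm_num, limsup_pos ε hε hε1 _ (by norm_num) (by norm_num)⟩
  · rintro t ⟨_, h⟩
    by_contra hcon
    push Not at hcon
    rw [limsup_zero ε hε (by linarith) t hcon] at h
    exact lt_irrefl _ h
  · intro w hw
    refine ⟨max (1/2) ((w + 1) / 2), ⟨by positivity, limsup_pos ε hε hε1 _ (by positivity) ?_⟩, ?_⟩
    · exact max_lt (by norm_num) (by linarith)
    · exact lt_of_lt_of_le (by linarith) (le_max_right _ _)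

lemma T_ent : HasUpperTopSlowEntropy T logScale 1 := by
  refine tendsto_const_nhds.congr' ?_
  have : ∀ᶠ ε : ℝ in 𝓝[>] 0, ε ∈ Set.Ioc (0:ℝ) (1/24) := Ioc_mem_nhdsGT (by norm_num)
  filter_upwards [this] with ε h
  exact (entFun_eq ε h.1 h.2).symm

end

end AbC
end


section
open MeasureTheory Filter Set
open scoped Topology ENNReal NNReal ContDiff

namespace AbC

noncomputable section

lemma q_grow (n j : ℕ) : (sq n).q * 2 ^ j ≤ (sq (n + j)).q := by
  induction j with
  | zero => simp
  | succ j ih =>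
    rw [← add_assoc, q_succ, pow_succ, ← mul_assoc]
    refine Nat.mul_le_mul ih ?_
    calc 2 ≤ 4 ^ 1 := by norm_num
      _ ≤ 4 ^ K (n + j) := Nat.pow_le_pow_right (by norm_num) (K_pos _)

lemma inv_q_le (n j : ℕ) : 1 / ((sq (n + j)).q : ℝ) ≤ 1 / (sq n).q * (1/2) ^ j := by
  have h := q_grow n j
  have h' : ((sq n).q : ℝ) * 2 ^ j ≤ (sq (n + j)).q := by exact_mod_cast h
  have := (sq n).qpos
  calc 1 / ((sq (n + j)).q : ℝ) ≤ 1 / ((sq n).q * 2 ^ j) := one_div_le_one_div_of_le (by positivity) h'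
    _ = _ := by rw [one_div_pow]; field_simp

lemma inv_q_tendsto : Tendsto (fun n => 2 / ((sq n).q : ℝ)) atTop (𝓝 0) := by
  refine squeeze_zero (fun n => by have := (sq n).qpos; positivity) (fun n => ?_) half_tendsto
  have h := inv_q_le 0 n
  rw [zero_add] at h
  have h2 : 1 / ((sq 0).q : ℝ) ≤ 1 := by
    have : (1:ℝ) ≤ (sq 0).q := by have := (sq 0).hq; exact_mod_cast (by omega)
    rw [div_le_one (by linarith)]; exact this
  have h3 : (0:ℝ) ≤ (1/2)^n := by positivity
  have : 2 / ((sq n).q : ℝ) = 2 * (1 / (sq n).q) := by ring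
  rw [this]
  nlinarith

lemma seq_lim (x : ℕ → ℝ) (h : ∀ m, |x (m+1) - x m| ≤ 1 / (sq m).q) :
    ∃ a, Tendsto x atTop (𝓝 a) ∧ ∀ n, |x n - a| ≤ 2 / (sq n).q := by
  have hc : ∀ n j, dist (x (n + j)) (x (n + (j + 1))) ≤ (1 / (sq n).q) * (1/2) ^ j := fun n j => by
    rw [dist_comm, Real.dist_eq]
    exact (h (n + j)).trans (inv_q_le n j)
  have hC : CauchySeq x := by
    refine cauchySeq_of_le_geometric (1/2) (1 / (sq 0).q) (by norm_num) fun n => ?_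
    have := hc 0 n
    simpa using this
  obtain ⟨a, ha⟩ := cauchySeq_tendsto_of_complete hC
  refine ⟨a, ha, fun n => ?_⟩
  have := dist_le_of_le_geometric_of_tendsto₀ (1/2 : ℝ) (1 / (sq n).q) (by norm_num) (f := fun j => x (n + j)) (hc n)
    (by simpa [add_comm] using (tendsto_add_atTop_iff_nat n).2 ha)
  rw [← Real.dist_eq]
  refine this.trans (le_of_eq ?_)
  ring

lemma alpha_ex : ∃ a, Tendsto (fun n => (sq n).α) atTop (𝓝 a) ∧ ∀ n, |(sq n).α - a| ≤ 2 / (sq n).q := by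
  refine seq_lim _ fun m => ?_
  rw [α_succ]
  have := inv_q_le m 1
  have h2 := (sq m).qpos
  have h3 := (sq (m+1)).qpos
  rw [add_sub_cancel_left, abs_of_pos (by positivity)]
  refine this.trans ?_
  have : 0 < 1 / ((sq m).q : ℝ) := by positivity
  linarith

/-- the limit rotation number -/
def alpha : ℝ := alpha_ex.choose
lemma alpha_tendsto : Tendsto (fun n => (sq n).α) atTop (𝓝 alpha) := alpha_ex.choose_spec.1
lemma alpha_near (n : ℕ) : |(sq n).α - alpha| ≤ 2 / (sq n).q := alpha_ex.choose_spec.2 n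

lemma alpha_gt (n : ℕ) : (sq n).α < alpha := by
  have hm : StrictMono fun n => (sq n).α := strictMono_nat_of_lt_succ fun n => by
    rw [α_succ]
    have := (sq (n+1)).qpos
    have : 0 < 1 / ((sq (n+1)).q : ℝ) := by positivity
    linarith
  exact (hm (Nat.lt_succ_self n)).trans_le (hm.monotone.ge_of_tendsto alpha_tendsto _)

lemma alpha_irr : Irrational alpha := by
  rintro ⟨r, hr⟩
  have hd : (0:ℝ) < r.den := by exact_mod_cast r.den_pos
  have hr' : alpha * r.den = r.num := by
    rw [← hr]
    exact_mod_cast Rat.mul_den_eq_num r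
  obtain ⟨n, hn⟩ := exists_nat_gt (3 * (r.den : ℝ))
  have hq := (sq n).qpos
  have hq1 := (sq (n+1)).qpos
  have hα : (sq n).α * (sq n).q = (sq n).a := by unfold St.α; field_simp
  have h1 := alpha_gt n
  have h2 := (abs_le.1 (alpha_near (n+1))).1
  rw [α_succ] at h2
  have h3 : alpha - (sq n).α ≤ 3 / (sq (n+1)).q := by
    have : 3 / ((sq (n+1)).q : ℝ) = 1 / (sq (n+1)).q + 2 / (sq (n+1)).q := by ring
    rw [this]; linarith
  have h4 : ((sq (n+1)).q : ℝ) = (sq n).q * 4 ^ K n := by exact_mod_cast q_succ n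
  have h5 : (n : ℝ) < 4 ^ K n := by
    have : n < 4 ^ K n := (le_K n).trans_lt (Nat.lt_pow_self (by norm_num))
    exact_mod_cast this
  have hpos : (0:ℝ) < 4 ^ K n := by positivity
  rw [h4, le_div_iff₀ (by positivity)] at h3
  have h6 : (0:ℝ) < ((sq n).q * r.num - (sq n).a * r.den : ℤ) := by
    push_cast
    rw [← hr', ← hα]
    have := mul_pos (mul_pos hq hd) (sub_pos.2 h1)
    linarith
  have h7 : (((sq n).q * r.num - (sq n).a * r.den : ℤ) : ℝ) * 4 ^ K n ≤ 3 * r.den := by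
    push_cast
    rw [← hr', ← hα]
    have := mul_le_mul_of_nonneg_right h3 hd.le
    linarith
  have h8 : (1:ℝ) ≤ ((sq n).q * r.num - (sq n).a * r.den : ℤ) := by
    have : (0:ℤ) < ((sq n).q * r.num - (sq n).a * r.den : ℤ) := by exact_mod_cast h6
    exact_mod_cast this
  have := mul_le_mul_of_nonneg_right h8 hpos.le
  linarith

lemma Psi_ex (p : E2) : ∃ a, Tendsto (fun n => ((sq n).G p).1) atTop (𝓝 a) ∧
    ∀ n, |((sq n).G p).1 - a| ≤ 2 / (sq n).q := by
  refine seq_lim _ fun m => ?_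
  rw [sq_succ]
  refine (next_G_fst _ _ _ _ _).trans ?_
  have h2 := (sq m).qpos
  have h1 : (1:ℝ) ≤ K m := by exact_mod_cast K_pos m
  exact one_div_le_one_div_of_le h2 (by nlinarith)

/-- the limit of first coordinates -/
def Psi (p : E2) : ℝ := (Psi_ex p).choose
lemma Psi_tendsto (p : E2) : Tendsto (fun n => ((sq n).G p).1) atTop (𝓝 (Psi p)) := (Psi_ex p).choose_spec.1
lemma Psi_near (n : ℕ) (p : E2) : |((sq n).G p).1 - Psi p| ≤ 2 / (sq n).q := (Psi_ex p).choose_spec.2 n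

lemma Psi_cont : Continuous Psi := by
  have : TendstoUniformly (fun n p => ((sq n).G p).1) Psi atTop := by
    rw [Metric.tendstoUniformly_iff]
    intro ε hε
    filter_upwards [inv_q_tendsto.eventually_lt_const hε] with n hn p
    rw [dist_comm, Real.dist_eq]
    exact (Psi_near n p).trans_lt hn
  exact this.continuous (Frequently.of_forall fun n => continuous_fst.comp (sq n).sG.continuous)

lemma Psi_equiv (p : E2) (m n : ℤ) : Psi (p + ((m:ℝ), (n:ℝ))) = Psi p + m := by
  refine tendsto_nhds_unique (Psi_tendsto _) ?_
  refine ((Psi_tendsto p).add_const _).congr fun j => ?_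
  rw [(sq j).eG]; rfl

lemma Psi_F (p : E2) : Psi (F p) = Psi p + alpha := by
  have h1 : Tendsto (fun n => Psi (Fn 1 n p)) atTop (𝓝 (Psi (F p))) :=
    (Psi_cont.tendsto _).comp (Fn_tendsto 1 (by simp) p)
  have h2 : Tendsto (fun n => ((sq n).G (Fn 1 n p)).1) atTop (𝓝 (Psi (F p))) := by
    refine h1.congr_dist ?_
    refine squeeze_zero (fun _ => dist_nonneg) (fun n => ?_) inv_q_tendsto
    rw [dist_comm, Real.dist_eq]
    exact Psi_near n _
  refine tendsto_nhds_unique h2 ?_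
  refine ((Psi_tendsto p).add alpha_tendsto).congr fun n => ?_
  simp [Fn, St.F, (sq n).GH, rot]

/-- the factor map -/
def psi (z : Torus2) : Torus1 := (Psi (rep z) : Torus1)

lemma psi_proj (p : E2) : psi (torusProj p) = (Psi p : Torus1) := by
  unfold psi
  obtain ⟨m, n, h⟩ := (torusProj_eq_iff _ _).1 (proj_rep (torusProj p))
  rw [h, Psi_equiv, coe_eq_iff]
  exact ⟨m, rfl⟩

lemma psi_cont : Continuous psi := by
  refine isOpenQuotientMap_proj.isQuotientMap.continuous_iff.2 ?_
  have : psi ∘ torusProj = fun p => (Psi p : Torus1) := funext psi_proj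
  rw [this]
  exact (AddCircle.continuous_mk' 1).comp Psi_cont

lemma psi_mp : MeasurePreserving psi (volume : Measure Torus2) volume := by
  refine measurePreserving_of_tendsto (f := fun n z => (desc (sq n).G z).1)
    (fun n => ?_) psi_cont.measurable fun z => ?_
  · exact (measurePreserving_fst (μ := (volume : Measure Torus1)) (ν := (volume : Measure Torus1))).comp (sq n).mG
  · exact ((AddCircle.continuous_mk' 1).tendsto _).comp (Psi_tendsto (rep z))

lemma psi_T (z : Torus2) : psi (T z) = psi z + (alpha : Torus1) := by
  obtain ⟨p, rfl⟩ := torusProj_surj z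
  rw [T_proj, psi_proj, psi_proj, Psi_F]; rfl

/-- bad sets -/
def Bad (n : ℕ) : Set Torus2 :=
  {z | ‖(desc (sq (n+1)).G z).2‖ < eta n} ∪ {z | ‖(sq n).q • (desc (sq n).G z).1‖ < eta n}

lemma desc_G_cont (n : ℕ) : Continuous (desc (sq n).G) := desc_continuous (sq n).eG (sq n).sG.continuous

lemma Bad_meas (n : ℕ) : MeasurableSet (Bad n) := by
  refine MeasurableSet.union ?_ ?_
  · exact (isOpen_lt ((continuous_snd.comp (desc_G_cont (n+1))).norm) continuous_const).measurableSet
  · exact (isOpen_lt (((continuous_nsmul (sq n).q).comp (continuous_fst.comp (desc_G_cont n))).norm) continuous_const).measurableSet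

lemma vol_ball (η : ℝ) : (volume : Measure Torus1) {x | ‖x‖ < η} ≤ ENNReal.ofReal (2 * η) := by
  calc (volume : Measure Torus1) {x | ‖x‖ < η} ≤ volume (Metric.closedBall (0:Torus1) η) :=
        measure_mono fun x hx => by simpa using (le_of_lt hx)
    _ = ENNReal.ofReal (min 1 (2 * η)) := AddCircle.volume_closedBall 1 η
    _ ≤ _ := ENNReal.ofReal_le_ofReal (min_le_right _ _)

lemma ball_meas (η : ℝ) : MeasurableSet {x : Torus1 | ‖x‖ < η} := (isOpen_lt continuous_norm continuous_const).measurableSet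

lemma Bad_vol (n : ℕ) : volume (Bad n) ≤ ENNReal.ofReal ((1/2) ^ n) := by
  have m1 : MeasurePreserving (fun z => (desc (sq (n+1)).G z).2) (volume : Measure Torus2) volume :=
    (measurePreserving_snd (μ := (volume : Measure Torus1)) (ν := (volume : Measure Torus1))).comp (sq (n+1)).mG
  have m2 : MeasurePreserving (fun z => (sq n).q • (desc (sq n).G z).1) (volume : Measure Torus2) (volume : Measure Torus1) :=
    ((AddCircle.ergodic_nsmul (T := 1) (by have := (sq n).hq; omega : 1 < (sq n).q)).toMeasurePreserving).comp
    ((measurePreserving_fst (μ := (volume : Measure Torus1)) (ν := (volume : Measure Torus1))).comp (sq n).mG)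
  have h1 := m1.measure_preimage (ball_meas (eta n)).nullMeasurableSet
  have h2 := m2.measure_preimage (ball_meas (eta n)).nullMeasurableSet
  calc volume (Bad n) ≤ volume {z | ‖(desc (sq (n+1)).G z).2‖ < eta n} + volume {z | ‖(sq n).q • (desc (sq n).G z).1‖ < eta n} :=
        measure_union_le _ _
    _ ≤ ENNReal.ofReal (2 * eta n) + ENNReal.ofReal (2 * eta n) :=
        add_le_add (h1.le.trans (vol_ball _)) (h2.le.trans (vol_ball _))
    _ = ENNReal.ofReal (2 * eta n + 2 * eta n) := by
        rw [ENNReal.ofReal_add] <;> (have := eta_pos n; positivity)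
    _ ≤ _ := by
        refine ENNReal.ofReal_le_ofReal ?_
        unfold eta
        rw [pow_add]
        have : (0:ℝ) < (1/2)^n := by positivity
        linarith

/-- eventually good points -/
def Ginf : Set Torus2 := liminf (fun n => (Bad n)ᶜ) atTop

lemma mem_Ginf (z : Torus2) : z ∈ Ginf ↔ ∀ᶠ n in atTop, z ∉ Bad n := by
  unfold Ginf
  rw [mem_liminf_iff_eventually_mem]
  rfl

lemma Ginf_meas : MeasurableSet Ginf := MeasurableSet.measurableSet_liminf fun n => (Bad_meas n).compl

lemma Ginf_ae : ∀ᵐ z ∂(volume : Measure Torus2), z ∈ Ginf := by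
  have h : ∑' n, (volume : Measure Torus2) (Bad n) ≠ (⊤ : ℝ≥0∞) := by
    refine ne_top_of_le_ne_top ?_ (ENNReal.tsum_le_tsum Bad_vol)
    rw [← ENNReal.ofReal_tsum_of_nonneg (fun n => by positivity) sum_half]
    exact ENNReal.ofReal_ne_top
  filter_upwards [ae_eventually_notMem h] with z hz
  exact (mem_Ginf z).2 hz

lemma good_of (n : ℕ) (p : E2) (h : torusProj p ∉ Bad n) : Good (sq n) (sn n) (K n) ((sq (n+1)).G p) := by
  simp only [Bad, mem_union, mem_setOf_eq, not_or, not_lt] at h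
  rw [desc_proj (sq (n+1)).eG, desc_proj (sq n).eG] at h
  refine ⟨h.1, ?_⟩
  have e : ((sq (n+1)).G p).1 - fB (sn n) (sq n).q (K n) ((sq (n+1)).G p).2 = ((sq n).G p).1 := by
    show ((sq n).G p).1 + fB (sn n) (sq n).q (K n) _ - fB (sn n) (sq n).q (K n) _ = _
    exact add_sub_cancel_right _ _
  rw [e, ← nsmul_eq_mul, AddCircle.coe_nsmul]
  exact h.2

lemma psi_inj : InjOn psi Ginf := by
  intro z hz z' hz' h
  obtain ⟨p, rfl⟩ := torusProj_surj z
  obtain ⟨p1, rfl⟩ := torusProj_surj z'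
  rw [psi_proj, psi_proj] at h
  obtain ⟨m, hm⟩ := (coe_eq_iff _ _).1 h
  obtain ⟨p', hp', hpp⟩ : ∃ p', torusProj p' = torusProj p1 ∧ Psi p = Psi p' := by
    refine ⟨p1 + ((m:ℝ), ((0:ℤ):ℝ)), torusProj_add_int _ _ _, ?_⟩
    rw [Psi_equiv]; exact hm
  rw [← hp'] at hz' ⊢
  have hh : Tendsto (fun n : ℕ => (1/2 : ℝ) ^ n) atTop (𝓝 0) := tendsto_pow_atTop_nhds_zero_of_lt_one (by norm_num) (by norm_num)
  rw [← dist_le_zero]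
  refine ge_of_tendsto hh ?_
  filter_upwards [(mem_Ginf _).1 hz, (mem_Ginf _).1 hz'] with n h1 h2
  have := (sq_step n).good _ _ (good_of n p h1) (good_of n p' h2) ?_
  · rwa [← sq_succ, (sq (n+1)).HG, (sq (n+1)).HG] at this
  · have e1 := abs_le.1 (Psi_near (n+1) p)
    have e2 := abs_le.1 (Psi_near (n+1) p')
    have e : (4:ℝ) / ((sq n).q * 4 ^ K n) = 2 / (sq (n+1)).q + 2 / (sq (n+1)).q := by
      have : ((sq (n+1)).q : ℝ) = (sq n).q * 4 ^ K n := by exact_mod_cast q_succ n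
      rw [this]; ring
    rw [e, abs_le]
    constructor <;> linarith [e1.1, e1.2, e2.1, e2.2]

/-- the invariant full measure set -/
def AA : Set Torus2 := ⋂ i : ℕ, T^[i] ⁻¹' Ginf

lemma AA_meas : MeasurableSet AA := MeasurableSet.iInter fun i => (T_cont.measurable.iterate i) Ginf_meas
lemma AA_sub : AA ⊆ Ginf := fun z hz => by simpa using mem_iInter.1 hz 0
lemma AA_maps : MapsTo T AA AA := fun z hz => mem_iInter.2 fun i => by
  have := mem_iInter.1 hz (i + 1)
  rwa [mem_preimage, Function.iterate_succ_apply] at this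
lemma AA_ae : ∀ᵐ z ∂(volume : Measure Torus2), z ∈ AA := by
  unfold AA
  simp only [mem_iInter]
  rw [ae_all_iff]
  intro i
  exact (T_mp.iterate i).quasiMeasurePreserving.ae Ginf_ae

lemma AA_ne : AA.Nonempty := AA_ae.exists

lemma psi_emb : MeasurableEmbedding (fun z : AA => psi z) := by
  have : StandardBorelSpace AA := AA_meas.standardBorel
  exact (psi_cont.measurable.comp measurable_subtype_coe).measurableEmbedding
    fun a b h => Subtype.ext (psi_inj (AA_sub a.2) (AA_sub b.2) h)

lemma phi_ex : ∃ g : Torus1 → Torus2, Measurable g ∧ ∀ z ∈ AA, g (psi z) = z := by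
  have : Nonempty Torus2 := ⟨0⟩
  obtain ⟨g, hg, h⟩ := psi_emb.exists_measurable_extend (measurable_subtype_coe (p := fun z => z ∈ AA)) (fun _ => inferInstance)
  exact ⟨g, hg, fun z hz => congrFun h ⟨z, hz⟩⟩

/-- the image -/
def BB : Set Torus1 := psi '' AA
lemma BB_meas : MeasurableSet BB := by
  have := psi_emb.measurableSet_range
  convert this using 1
  unfold BB
  rw [image_eq_range]

lemma T_iso : IsoToIrrationalRotation T := by
  obtain ⟨g, hg, h⟩ := phi_ex
  refine ⟨alpha, alpha_irr, AA, BB, psi, g, AA_meas, BB_meas, AA_ae, ?_, AA_maps, ?_, psi_cont.measurable, hg,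
    fun z hz => ⟨z, hz, rfl⟩, ?_, h, ?_, psi_mp.map_eq, fun z _ => psi_T z⟩
  · rw [← psi_mp.measure_preimage BB_meas.compl.nullMeasurableSet]
    refine measure_mono_null ?_ (show volume AAᶜ = 0 from AA_ae)
    intro z hz hA
    exact hz ⟨z, hA, rfl⟩
  · rintro _ ⟨z, hz, rfl⟩
    exact ⟨T z, AA_maps hz, psi_T z⟩
  · rintro _ ⟨z, hz, rfl⟩
    rw [h z hz]; exact hz
  · rintro _ ⟨z, hz, rfl⟩
    rw [h z hz]

lemma rot_ergodic : Ergodic (fun x : Torus1 => x + (alpha : Torus1)) volume := by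
  refine AddCircle.ergodic_add_right.2 ?_
  rw [addOrderOf_eq_zero_iff']
  intro n hn h
  rw [← AddCircle.coe_nsmul, ← AddCircle.coe_zero, coe_eq_iff] at h
  obtain ⟨m, hm⟩ := h
  refine (alpha_irr.natCast_mul hn.ne').ne_int m ?_
  simpa using hm

lemma T_ergodic : Ergodic T volume := by
  refine { T_mp with aeconst_set := ?_ }
  intro s hs hinv
  obtain ⟨g, hg, h⟩ := phi_ex
  have hps : psi ⁻¹' (g ⁻¹' s) =ᵐ[volume] s := by
    filter_upwards [AA_ae] with z hz
    exact propext (by show g (psi z) ∈ s ↔ z ∈ s; rw [h z hz])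
  have hBB : ∀ᵐ y ∂(volume : Measure Torus1), y ∈ BB := by
    have : volume BBᶜ = 0 := by
      rw [← psi_mp.measure_preimage BB_meas.compl.nullMeasurableSet]
      refine measure_mono_null ?_ (show volume AAᶜ = 0 from AA_ae)
      intro z hz hA
      exact hz ⟨z, hA, rfl⟩
    exact this
  have hi : (fun x : Torus1 => x + (alpha : Torus1)) ⁻¹' (g ⁻¹' s) =ᵐ[volume] g ⁻¹' s := by
    filter_upwards [hBB] with y hy
    obtain ⟨z, hz, rfl⟩ := hy
    refine propext ?_
    show g (psi z + alpha) ∈ s ↔ g (psi z) ∈ s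
    rw [← psi_T, h z hz, h _ (AA_maps hz)]
    exact Set.ext_iff.1 hinv z
  rcases rot_ergodic.quasiErgodic.ae_empty_or_univ₀ (hg hs).nullMeasurableSet hi with h0 | h0
  · rw [eventuallyConst_set']
    left
    exact hps.symm.trans (psi_mp.quasiMeasurePreserving.preimage_ae_eq h0)
  · rw [eventuallyConst_set']
    right
    exact hps.symm.trans (psi_mp.quasiMeasurePreserving.preimage_ae_eq h0)

end

end AbC
end

/-- There exists an ergodic `C^∞` volume-preserving diffeomorphism `T` of
`𝕋²`, measure-theoretically isomorphic to an irrational circle rotation, whose upper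
topological slow entropy w.r.t. the logarithmic scale `a^{ln}_m(t) = (ln m)^t` equals `1`. -/
theorem stmt5 :
    ∃ T : Torus2 → Torus2,
      IsCkTorusDiffeo ⊤ T ∧
      MeasurePreserving T (volume : Measure Torus2) volume ∧
      Ergodic T (volume : Measure Torus2) ∧
      IsoToIrrationalRotation T ∧
      HasUpperTopSlowEntropy T logScale 1 := by
  exact ⟨AbC.T, AbC.T_diffeo, AbC.T_mp, AbC.T_ergodic, AbC.T_iso, AbC.T_ent⟩
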